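/- arXiv:1510.02903 — 2 statements merged into one kernel-verified Lean document; each statement's English description precedes it below -/
import Mathlib

section
/- Assume conditions (B1') and (B2') hold. Then for any real r ≥ 2 there exists a constant W̄*_r > 0, not depending on x or n, such that for every x ∈ X with υ*_{r,max}(x) < ∞ and g*_r(x) < ∞ and every n ≥ 2: E_x|W̄_n(g)|^r ≤ W̄*_r · (1 + υ*_{r,max}(x) + g*_r(x)) / n^{r/2}. -/
open MeasureTheory ProbabilityTheory Filter Set ENNReal

noncomputable section

/-- A time-homogeneous Markov chain on a measurable space `𝒳`: a Markov transition kernel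
`K` together with, for every starting point `x`, the law `law x` (on the path space
`ℕ → 𝒳`) of the chain started at `x`, characterized by `X 0 = x` a.s. and the Markov
property with transition kernel `K`. -/
structure MarkovChain (𝒳 : Type) [MeasurableSpace 𝒳] where
  K : Kernel 𝒳 𝒳
  isMarkov : IsMarkovKernel K
  law : 𝒳 → Measure (ℕ → 𝒳)
  law_prob : ∀ x, IsProbabilityMeasure (law x)
  law_zero : ∀ x, law x {ω | ω 0 = x} = 1
  law_markov : ∀ (x : 𝒳) (n : ℕ) (A : Set 𝒳), MeasurableSet A →
    ∀ B : Set (ℕ → 𝒳),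
      MeasurableSet[MeasurableSpace.comap
        (fun (ω : ℕ → 𝒳) (i : Fin (n + 1)) => ω i) inferInstance] B →
      law x ({ω | ω (n + 1) ∈ A} ∩ B) = ∫⁻ ω in B, K (ω n) A ∂(law x)

namespace MarkovChain

variable {𝒳 : Type} [MeasurableSpace 𝒳] (M : MarkovChain 𝒳)

/-- `g̃(u) = ∫ g(v,u) P(u,dv)`. -/
def gtilde (g : 𝒳 → 𝒳 → ℝ) (u : 𝒳) : ℝ := ∫ v, g v u ∂(M.K u)

/-- `υ*_r(x) = sup_{n ≥ 0} E_x V(X_n)^r`. -/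
def upsStar (V : 𝒳 → ℝ) (r : ℝ) (x : 𝒳) : ℝ≥0∞ :=
  ⨆ n : ℕ, ∫⁻ ω, ENNReal.ofReal (V (ω n) ^ r) ∂(M.law x)

/-- `g*_r(x) = sup_{j ≥ 1} E_x |g(X_j, X_{j-1})|^r`. -/
def gStar (g : 𝒳 → 𝒳 → ℝ) (r : ℝ) (x : 𝒳) : ℝ≥0∞ :=
  ⨆ j : ℕ, ∫⁻ ω, ENNReal.ofReal (|g (ω (j + 1)) (ω j)| ^ r) ∂(M.law x)

end MarkovChain

/-!
By (B1') at `l = 0` and residue `1`, the weight `V` of that residue class has `P V ≤ C V`. This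
spreads the geometric decay of `P^(p l + 1) g̃ - c`, where `c` is the limit mean of `g̃` along that
class, to all powers of `P`. Hence all the `λ_ι(g̃)` equal `c`, and `G = ∑ₙ Pⁿ (g̃ - c)` solves the
Poisson equation `G - P G = g̃ - c` with `|G| ≤ A V`. Then
`W_n(g) - n c = ∑ⱼ (g(X_j, X_{j-1}) - c + G(X_j) - G(X_{j-1})) + G(X_0) - G(X_n)`,
where the sum is a martingale whose `Lʳ` norm is at most a constant times `√n` times the largest
`Lʳ` norm of an increment.

It remains to bound `‖G(X_k)‖_r` uniformly in `k`. The moments of `V(X_k)` are controlled only for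
`k ≡ 1 [MOD p]`, but the Poisson equation and Jensen's inequality bound `‖G(X_k)‖_r` by
`‖G(X_{k+1})‖_r` plus a constant, so a bound at such times is enough.

The martingale inequality rests on the expansion of `|a + b| ^ r` to second order in `b`: the linear
term integrates to zero and Hölder's inequality gives `‖S + D‖_r² ≤ ‖S‖_r² + C_r ‖D‖_r²` for a
martingale difference `D`.
-/

/-! ### Scalar inequalities -/

lemma one_add_rpow_le {r t : ℝ} (hr : 1 ≤ r) (ht : |r * t| ≤ 1) :
    (1 + t) ^ r ≤ 1 + r * t + (r * t) ^ 2 := by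
  have ht1 : 0 ≤ 1 + t := by nlinarith [(abs_le.1 ht).1]
  calc (1 + t) ^ r ≤ Real.exp t ^ r :=
        Real.rpow_le_rpow ht1 (by linarith [Real.add_one_le_exp t]) (by linarith)
    _ = Real.exp (r * t) := by rw [← Real.exp_mul, mul_comm]
    _ ≤ 1 + r * t + (r * t) ^ 2 := by
        linarith [(abs_le.1 (Real.abs_exp_sub_one_sub_id_le ht)).2]

lemma rpow_mul_rpow_le_add {x y a b : ℝ} (hx : 0 ≤ x) (hy : 0 ≤ y) (ha : 0 ≤ a) (hb : 0 ≤ b) :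
    x ^ a * y ^ b ≤ x ^ (a + b) + y ^ (a + b) := by
  have hxr : 0 ≤ x ^ (a + b) := Real.rpow_nonneg hx _
  have hyr : 0 ≤ y ^ (a + b) := Real.rpow_nonneg hy _
  rcases le_total x y with hxy | hxy
  · calc x ^ a * y ^ b ≤ y ^ a * y ^ b := by gcongr
      _ ≤ x ^ (a + b) + y ^ (a + b) := by rw [← Real.rpow_add_of_nonneg hy ha hb]; linarith
  · calc x ^ a * y ^ b ≤ x ^ a * x ^ b := by gcongr
      _ ≤ x ^ (a + b) + y ^ (a + b) := by rw [← Real.rpow_add_of_nonneg hx ha hb]; linarith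

/-- A constant for the remainder in the second-order expansion of `|a + b| ^ r`, namely the sum of
those needed in the regimes `r * |b| ≤ |a|` and `|a| < r * |b|`. -/
def expansionConst (r : ℝ) : ℝ := r ^ 2 + (1 + r) ^ r + r ^ r

lemma one_le_expansionConst {r : ℝ} (hr : 1 ≤ r) : 1 ≤ expansionConst r := by
  have h1 : 0 ≤ (1 + r) ^ r := by positivity
  have h2 : 0 ≤ r ^ r := by positivity
  unfold expansionConst
  nlinarith

lemma abs_mul_abs_rpow_sub_two {r : ℝ} (hr : 2 ≤ r) (a : ℝ) :
    |a * |a| ^ (r - 2)| = |a| ^ (r - 1) := by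
  rw [abs_mul, abs_of_nonneg (Real.rpow_nonneg (abs_nonneg a) _), mul_comm]
  rw [← Real.rpow_add_one' (abs_nonneg a) (by linarith)]
  congr 1
  ring

lemma abs_add_rpow_le_of_lt {r a b : ℝ} (hr : 2 ≤ r) (hab : |a| < r * |b|) :
    |a + b| ^ r ≤ |a| ^ r + r * (a * |a| ^ (r - 2)) * b + ((1 + r) ^ r + r ^ r) * |b| ^ r := by
  have hsum : |a + b| ^ r ≤ (1 + r) ^ r * |b| ^ r := by
    rw [← Real.mul_rpow (by positivity) (abs_nonneg b)]
    exact Real.rpow_le_rpow (abs_nonneg _) (by linarith [abs_add_le a b]) (by linarith)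
  have hcross : -(r * (a * |a| ^ (r - 2)) * b) ≤ r ^ r * |b| ^ r :=
    calc -(r * (a * |a| ^ (r - 2)) * b) ≤ |r * (a * |a| ^ (r - 2)) * b| := neg_le_abs _
      _ = |a| ^ (r - 1) * (r * |b|) := by
          rw [abs_mul, abs_mul, abs_mul_abs_rpow_sub_two hr, abs_of_nonneg (by linarith : 0 ≤ r)]
          ring
      _ ≤ (r * |b|) ^ (r - 1) * (r * |b|) := by
          gcongr
          linarith
      _ = r ^ r * |b| ^ r := by
          rw [← Real.rpow_add_one' (by positivity) (by linarith), sub_add_cancel,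
            Real.mul_rpow (by linarith) (abs_nonneg b)]
  linarith [Real.rpow_nonneg (abs_nonneg a) r]

lemma abs_add_rpow_le_of_le {r a b : ℝ} (hr : 2 ≤ r) (hab : r * |b| ≤ |a|) :
    |a + b| ^ r ≤ |a| ^ r + r * (a * |a| ^ (r - 2)) * b + r ^ 2 * (|a| ^ (r - 2) * b ^ 2) := by
  obtain rfl | ha := eq_or_ne a 0
  · have hb : b = 0 := by
      rw [abs_zero] at hab
      exact abs_eq_zero.1 (le_antisymm (by nlinarith [abs_nonneg b]) (abs_nonneg b))
    simp [hb]
  obtain ⟨t, rfl⟩ : ∃ t, b = a * t := ⟨b / a, by field_simp⟩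
  have hrt : |r * t| ≤ 1 := by
    rw [abs_mul, abs_of_nonneg (by linarith : 0 ≤ r)]
    rw [abs_mul] at hab
    nlinarith [abs_pos.2 ha]
  have ht : 0 ≤ 1 + t := by nlinarith [(abs_le.1 hrt).1]
  have hpow : |a| ^ r = |a| ^ (r - 2) * a ^ 2 := by
    rw [← sq_abs a, ← Real.rpow_two, ← Real.rpow_add (abs_pos.2 ha), sub_add_cancel]
  calc |a + a * t| ^ r = |a| ^ r * (1 + t) ^ r := by
        rw [← mul_one_add, abs_mul, abs_of_nonneg ht, Real.mul_rpow (abs_nonneg a) ht]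
    _ ≤ |a| ^ r * (1 + r * t + (r * t) ^ 2) := by
        gcongr
        exact one_add_rpow_le (by linarith) hrt
    _ = _ := by rw [hpow]; ring

lemma abs_add_rpow_le {r : ℝ} (hr : 2 ≤ r) (a b : ℝ) :
    |a + b| ^ r ≤ |a| ^ r + r * (a * |a| ^ (r - 2)) * b
      + expansionConst r * (|a| ^ (r - 2) * |b| ^ (2 : ℝ) + |b| ^ r) := by
  have hA : 0 ≤ |a| ^ (r - 2) * b ^ 2 := by positivity
  have hB : 0 ≤ |b| ^ r := by positivity
  have h1 : 0 ≤ (1 + r) ^ r := by positivity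
  have h2 : 0 ≤ r ^ r := by positivity
  rw [Real.rpow_two, sq_abs, expansionConst]
  rcases lt_or_ge |a| (r * |b|) with hab | hab
  · nlinarith [abs_add_rpow_le_of_lt hr hab, mul_nonneg (sq_nonneg r) hB,
      mul_nonneg (sq_nonneg r) hA, mul_nonneg h1 hA, mul_nonneg h2 hA]
  · nlinarith [abs_add_rpow_le_of_le hr hab, mul_nonneg (sq_nonneg r) hB,
      mul_nonneg h1 hA, mul_nonneg h2 hA, mul_nonneg h1 hB, mul_nonneg h2 hB]

lemma rpow_add_mul_le_add_rpow {u v α : ℝ} (hu : 0 ≤ u) (hv : 0 ≤ v) (hα : 1 ≤ α) :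
    u ^ α + α * (u ^ (α - 1) * v) ≤ (u + v) ^ α := by
  obtain rfl | hα1 := hα.eq_or_lt
  · simp
  obtain rfl | hu0 := hu.eq_or_lt
  · simpa [Real.zero_rpow (sub_pos.2 hα1).ne', Real.zero_rpow (by linarith : α ≠ 0)] using
      Real.rpow_nonneg hv α
  have hbern : 1 + α * (v / u) ≤ (1 + v / u) ^ α :=
    one_add_mul_self_le_rpow_one_add (by linarith [div_nonneg hv hu]) hα
  calc u ^ α + α * (u ^ (α - 1) * v) = u ^ α * (1 + α * (v / u)) := by
        rw [Real.rpow_sub_one hu0.ne']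
        ring
    _ ≤ u ^ α * (1 + v / u) ^ α := by gcongr
    _ = (u + v) ^ α := by
        rw [← Real.mul_rpow hu (by positivity)]
        congr 1
        field_simp

lemma sq_rpow_half {y : ℝ} (hy : 0 ≤ y) (s : ℝ) : (y ^ 2) ^ (s / 2) = y ^ s := by
  rw [← Real.rpow_natCast_mul hy]
  congr 1
  push_cast
  ring

lemma add_mul_le_rpow_half {r C x d : ℝ} (hr : 2 ≤ r) (hC : 1 ≤ C) (hx : 0 ≤ x) (hd : 0 ≤ d) :
    x ^ r + C * (x ^ (r - 2) * d ^ (2 : ℝ) + d ^ r) ≤ (x ^ 2 + 2 * C * d ^ 2) ^ (r / 2) := by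
  have htangent : x ^ r + r / 2 * (x ^ (r - 2) * (2 * C * d ^ 2))
      ≤ (x ^ 2 + 2 * C * d ^ 2) ^ (r / 2) := by
    have h := rpow_add_mul_le_add_rpow (sq_nonneg x) (by positivity : 0 ≤ 2 * C * d ^ 2)
      (by linarith : 1 ≤ r / 2)
    rwa [sq_rpow_half hx, show r / 2 - 1 = (r - 2) / 2 by ring, sq_rpow_half hx] at h
  have hsuper : x ^ r + (2 * C) * d ^ r ≤ (x ^ 2 + 2 * C * d ^ 2) ^ (r / 2) :=
    calc x ^ r + (2 * C) * d ^ r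
        ≤ (x ^ 2) ^ (r / 2) + (2 * C) ^ (r / 2) * (d ^ 2) ^ (r / 2) := by
          rw [sq_rpow_half hx, sq_rpow_half hd]
          gcongr
          exact Real.self_le_rpow_of_one_le (by linarith) (by linarith)
      _ = (x ^ 2) ^ (r / 2) + (2 * C * d ^ 2) ^ (r / 2) := by
          rw [Real.mul_rpow (by linarith) (sq_nonneg d)]
      _ ≤ (x ^ 2 + 2 * C * d ^ 2) ^ (r / 2) :=
          Real.add_rpow_le_rpow_add (sq_nonneg x) (by positivity) (by linarith)
  have hquad : 0 ≤ (r - 2) * C * (x ^ (r - 2) * d ^ 2) :=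
    mul_nonneg (mul_nonneg (by linarith) (by linarith)) (by positivity)
  rw [Real.rpow_two]
  linarith

/-! ### An `Lʳ` inequality for martingales -/

section Martingale

variable {Ω : Type*} {mΩ : MeasurableSpace Ω} {μ : Measure Ω} {r : ℝ} {S D : Ω → ℝ}

lemma eLpNorm_ofReal_rpow {f : Ω → ℝ} (hr : 0 < r) :
    eLpNorm f (ENNReal.ofReal r) μ ^ r = ∫⁻ ω, ‖f ω‖ₑ ^ r ∂μ := by
  rw [eLpNorm_eq_lintegral_rpow_enorm_toReal (ENNReal.ofReal_pos.2 hr).ne' ENNReal.ofReal_ne_top,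
    ENNReal.toReal_ofReal hr.le, ← ENNReal.rpow_mul, one_div_mul_cancel hr.ne', ENNReal.rpow_one]

lemma lpNorm_ofReal_rpow {f : Ω → ℝ} (hr : 0 < r) (hf : AEStronglyMeasurable f μ) :
    lpNorm f (ENNReal.ofReal r) μ ^ r = ∫ ω, |f ω| ^ r ∂μ := by
  rw [lpNorm_eq_integral_norm_rpow_toReal (ENNReal.ofReal_pos.2 hr).ne' ENNReal.ofReal_ne_top hf,
    ENNReal.toReal_ofReal hr.le,
    Real.rpow_inv_rpow (integral_nonneg fun ω => Real.rpow_nonneg (norm_nonneg _) _) hr.ne']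
  simp only [Real.norm_eq_abs]

lemma integrable_abs_rpow (hr : 0 < r) (hS : MemLp S (ENNReal.ofReal r) μ) :
    Integrable (fun ω => |S ω| ^ r) μ := by
  simpa only [Real.norm_eq_abs, ENNReal.toReal_ofReal hr.le] using
    hS.integrable_norm_rpow (ENNReal.ofReal_pos.2 hr).ne' ENNReal.ofReal_ne_top

lemma integrable_abs_rpow_mul_abs_rpow {a b : ℝ} (ha : 0 ≤ a) (hb : 0 ≤ b) (hab : a + b = r)
    (hr : 0 < r) (hS : MemLp S (ENNReal.ofReal r) μ) (hD : MemLp D (ENNReal.ofReal r) μ) :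
    Integrable (fun ω => |S ω| ^ a * |D ω| ^ b) μ := by
  refine ((integrable_abs_rpow hr hS).add (integrable_abs_rpow hr hD)).mono' ?_
    (ae_of_all _ fun ω => ?_)
  · have := hS.aestronglyMeasurable.aemeasurable
    have := hD.aestronglyMeasurable.aemeasurable
    exact AEMeasurable.aestronglyMeasurable (by fun_prop)
  · rw [Real.norm_of_nonneg (by positivity), Pi.add_apply, ← hab]
    exact rpow_mul_rpow_le_add (abs_nonneg _) (abs_nonneg _) ha hb

lemma integral_abs_rpow_mul_abs_rpow_le {a b : ℝ} (ha : 0 ≤ a) (hb : 0 ≤ b) (hab : a + b = r)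
    (hr : 0 < r) (hS : MemLp S (ENNReal.ofReal r) μ) (hD : MemLp D (ENNReal.ofReal r) μ) :
    ∫ ω, |S ω| ^ a * |D ω| ^ b ∂μ
      ≤ lpNorm S (ENNReal.ofReal r) μ ^ a * lpNorm D (ENNReal.ofReal r) μ ^ b := by
  have hSm := hS.aestronglyMeasurable.aemeasurable
  have hDm := hD.aestronglyMeasurable.aemeasurable
  have hpow : ∀ (y : ℝ≥0∞) (c : ℝ), (y ^ r) ^ (c / r) = y ^ c := fun y c => by
    rw [← ENNReal.rpow_mul, mul_div_cancel₀ c hr.ne']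
  have hholder : ∫⁻ ω, ‖S ω‖ₑ ^ a * ‖D ω‖ₑ ^ b ∂μ
      ≤ eLpNorm S (ENNReal.ofReal r) μ ^ a * eLpNorm D (ENNReal.ofReal r) μ ^ b := by
    have h := ENNReal.lintegral_mul_norm_pow_le (μ := μ) (f := fun ω => ‖S ω‖ₑ ^ r)
      (g := fun ω => ‖D ω‖ₑ ^ r) (by fun_prop) (by fun_prop) (div_nonneg ha hr.le)
      (div_nonneg hb hr.le) (by rw [← add_div, hab, div_self hr.ne'])
    simpa only [← eLpNorm_ofReal_rpow hr, hpow] using h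
  rw [integral_eq_lintegral_of_nonneg_ae (ae_of_all _ fun ω => by positivity)
    (integrable_abs_rpow_mul_abs_rpow ha hb hab hr hS hD).aestronglyMeasurable,
    ← toReal_eLpNorm hS.aestronglyMeasurable, ← toReal_eLpNorm hD.aestronglyMeasurable,
    ENNReal.toReal_rpow, ENNReal.toReal_rpow, ← ENNReal.toReal_mul]
  refine ENNReal.toReal_mono (ENNReal.mul_ne_top ?_ ?_) (le_trans (le_of_eq ?_) hholder)
  · exact ENNReal.rpow_ne_top_of_nonneg ha hS.eLpNorm_ne_top
  · exact ENNReal.rpow_ne_top_of_nonneg hb hD.eLpNorm_ne_top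
  · refine lintegral_congr fun ω => ?_
    rw [ENNReal.ofReal_mul (by positivity), ← ENNReal.ofReal_rpow_of_nonneg (abs_nonneg _) ha,
      ← ENNReal.ofReal_rpow_of_nonneg (abs_nonneg _) hb, ← Real.enorm_eq_ofReal_abs,
      ← Real.enorm_eq_ofReal_abs]

lemma integrable_mul_abs_rpow_sub_two_mul (hr : 2 ≤ r) (hS : MemLp S (ENNReal.ofReal r) μ)
    (hD : MemLp D (ENNReal.ofReal r) μ) :
    Integrable (fun ω => S ω * |S ω| ^ (r - 2) * D ω) μ := by
  refine (integrable_abs_rpow_mul_abs_rpow (a := r - 1) (b := 1) (by linarith) zero_le_one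
    (by ring) (by linarith) hS hD).mono' ?_ (ae_of_all _ fun ω => ?_)
  · have := hS.aestronglyMeasurable.aemeasurable
    have := hD.aestronglyMeasurable.aemeasurable
    exact AEMeasurable.aestronglyMeasurable (by fun_prop)
  · rw [Real.norm_eq_abs, abs_mul, abs_mul_abs_rpow_sub_two hr, Real.rpow_one]

lemma lpNorm_add_rpow_le (hr : 2 ≤ r) (hS : MemLp S (ENNReal.ofReal r) μ)
    (hD : MemLp D (ENNReal.ofReal r) μ)
    (hcross : ∫ ω, S ω * |S ω| ^ (r - 2) * D ω ∂μ = 0) :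
    lpNorm (S + D) (ENNReal.ofReal r) μ ^ r ≤ lpNorm S (ENNReal.ofReal r) μ ^ r
      + expansionConst r * (lpNorm S (ENNReal.ofReal r) μ ^ (r - 2)
        * lpNorm D (ENNReal.ofReal r) μ ^ (2 : ℝ) + lpNorm D (ENNReal.ofReal r) μ ^ r) := by
  have hr0 : 0 < r := by linarith
  have hC : 0 ≤ expansionConst r := by linarith [one_le_expansionConst (by linarith : 1 ≤ r)]
  have hSr := integrable_abs_rpow hr0 hS
  have hDr := integrable_abs_rpow hr0 hD
  have hlin := (integrable_mul_abs_rpow_sub_two_mul hr hS hD).const_mul r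
  have hquad := integrable_abs_rpow_mul_abs_rpow (a := r - 2) (b := 2) (by linarith) zero_le_two
    (by ring) hr0 hS hD
  calc lpNorm (S + D) (ENNReal.ofReal r) μ ^ r
      = ∫ ω, |S ω + D ω| ^ r ∂μ := lpNorm_ofReal_rpow hr0 (hS.add hD).aestronglyMeasurable
    _ ≤ ∫ ω, (|S ω| ^ r + r * (S ω * |S ω| ^ (r - 2) * D ω)
          + expansionConst r * (|S ω| ^ (r - 2) * |D ω| ^ (2 : ℝ) + |D ω| ^ r)) ∂μ := by
        refine integral_mono (integrable_abs_rpow hr0 (hS.add hD))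
          ((hSr.add hlin).add ((hquad.add hDr).const_mul _)) fun ω => ?_
        simpa only [mul_assoc] using abs_add_rpow_le hr (S ω) (D ω)
    _ = lpNorm S (ENNReal.ofReal r) μ ^ r + expansionConst r *
          (∫ ω, |S ω| ^ (r - 2) * |D ω| ^ (2 : ℝ) ∂μ + lpNorm D (ENNReal.ofReal r) μ ^ r) := by
        rw [integral_add (by exact hSr.add hlin) (by exact (hquad.add hDr).const_mul _),
          integral_add hSr hlin, integral_const_mul, hcross, mul_zero, add_zero,
          integral_const_mul, integral_add hquad hDr,
          lpNorm_ofReal_rpow hr0 hS.aestronglyMeasurable,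
          lpNorm_ofReal_rpow hr0 hD.aestronglyMeasurable]
    _ ≤ _ := by
        gcongr
        exact integral_abs_rpow_mul_abs_rpow_le (by linarith) zero_le_two (by ring) hr0 hS hD

lemma lpNorm_add_sq_le (hr : 2 ≤ r) (hS : MemLp S (ENNReal.ofReal r) μ)
    (hD : MemLp D (ENNReal.ofReal r) μ)
    (hcross : ∫ ω, S ω * |S ω| ^ (r - 2) * D ω ∂μ = 0) :
    lpNorm (S + D) (ENNReal.ofReal r) μ ^ 2 ≤ lpNorm S (ENNReal.ofReal r) μ ^ 2
      + 2 * expansionConst r * lpNorm D (ENNReal.ofReal r) μ ^ 2 := by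
  have hC := one_le_expansionConst (by linarith : 1 ≤ r)
  refine (Real.rpow_le_rpow_iff (z := r / 2) (by positivity) (by positivity) (by linarith)).1 ?_
  rw [sq_rpow_half lpNorm_nonneg]
  exact (lpNorm_add_rpow_le hr hS hD hcross).trans
    (add_mul_le_rpow_half hr hC lpNorm_nonneg lpNorm_nonneg)

variable [IsFiniteMeasure μ]

lemma integral_mul_eq_zero_of_condExp_eq_zero {m : MeasurableSpace Ω} (hm : m ≤ mΩ)
    {Y D : Ω → ℝ} (hY : StronglyMeasurable[m] Y) (hD : Integrable D μ)
    (hYD : Integrable (Y * D) μ) (hcond : μ[D | m] =ᵐ[μ] 0) : ∫ ω, Y ω * D ω ∂μ = 0 := by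
  have hpull : μ[Y * D | m] =ᵐ[μ] Y * μ[D | m] := condExp_mul_of_stronglyMeasurable_left hY hYD hD
  calc ∫ ω, (Y * D) ω ∂μ = ∫ ω, μ[Y * D | m] ω ∂μ := (integral_condExp hm).symm
    _ = ∫ _, (0 : ℝ) ∂μ := integral_congr_ae (by
        filter_upwards [hpull, hcond] with ω h1 h2
        simp [h1, h2])
    _ = 0 := integral_zero _ _

variable {ℱ : Filtration ℕ mΩ} {f : ℕ → Ω → ℝ}

lemma martingale_lpNorm_sq_le (hr : 2 ≤ r) (hf : Martingale f ℱ μ) (hf0 : f 0 = 0)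
    (hLp : ∀ n, MemLp (f n) (ENNReal.ofReal r) μ) (n : ℕ) :
    lpNorm (f n) (ENNReal.ofReal r) μ ^ 2 ≤ 2 * expansionConst r *
      ∑ k ∈ Finset.range n, lpNorm (f (k + 1) - f k) (ENNReal.ofReal r) μ ^ 2 := by
  induction n with
  | zero => simp [hf0]
  | succ n ih =>
    have hDLp := (hLp (n + 1)).sub (hLp n)
    have hweight : StronglyMeasurable[ℱ n] fun ω => f n ω * |f n ω| ^ (r - 2) := by
      have := (hf.stronglyMeasurable n).measurable
      exact Measurable.stronglyMeasurable (by fun_prop)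
    have hcond : μ[f (n + 1) - f n | ℱ n] =ᵐ[μ] 0 := by
      filter_upwards [condExp_sub (hf.integrable (n + 1)) (hf.integrable n) (ℱ n),
        hf.condExp_ae_eq n.le_succ, hf.condExp_ae_eq (le_refl n)] with ω hsub hsucc hself
      simp [hsub, hsucc, hself]
    have hcross : ∫ ω, f n ω * |f n ω| ^ (r - 2) * (f (n + 1) - f n) ω ∂μ = 0 :=
      integral_mul_eq_zero_of_condExp_eq_zero (ℱ.le n) hweight
        ((hf.integrable (n + 1)).sub (hf.integrable n))
        (integrable_mul_abs_rpow_sub_two_mul hr (hLp n) hDLp) hcond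
    have hstep := lpNorm_add_sq_le hr (hLp n) hDLp hcross
    rw [add_sub_cancel] at hstep
    rw [Finset.sum_range_succ, mul_add]
    linarith

lemma martingale_eLpNorm_le {b : ℝ} (hr : 2 ≤ r) (hb : 0 ≤ b) (hf : Martingale f ℱ μ)
    (hf0 : f 0 = 0)
    (hincr : ∀ n, eLpNorm (f (n + 1) - f n) (ENNReal.ofReal r) μ ≤ ENNReal.ofReal b) (n : ℕ) :
    eLpNorm (f n) (ENNReal.ofReal r) μ ≤ ENNReal.ofReal (√(2 * expansionConst r * n) * b) := by
  have hDLp : ∀ n, MemLp (f (n + 1) - f n) (ENNReal.ofReal r) μ := fun n =>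
    ⟨((hf.integrable (n + 1)).sub (hf.integrable n)).aestronglyMeasurable,
      (hincr n).trans_lt ENNReal.ofReal_lt_top⟩
  have hLp : ∀ n, MemLp (f n) (ENNReal.ofReal r) μ := fun n => by
    induction n with
    | zero => simp [hf0]
    | succ n ih => simpa using ih.add (hDLp n)
  have hC := one_le_expansionConst (by linarith : 1 ≤ r)
  have hincr' : ∀ k, lpNorm (f (k + 1) - f k) (ENNReal.ofReal r) μ ≤ b := fun k => by
    rw [← ENNReal.ofReal_le_ofReal_iff hb, ofReal_lpNorm (hDLp k)]
    exact hincr k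
  have hsq : lpNorm (f n) (ENNReal.ofReal r) μ ^ 2 ≤ (√(2 * expansionConst r * n) * b) ^ 2 :=
    calc lpNorm (f n) (ENNReal.ofReal r) μ ^ 2
        ≤ 2 * expansionConst r * ∑ k ∈ Finset.range n, b ^ 2 := by
          refine (martingale_lpNorm_sq_le hr hf hf0 hLp n).trans ?_
          gcongr with k
          · exact lpNorm_nonneg
          · exact hincr' k
      _ = (√(2 * expansionConst r * n) * b) ^ 2 := by
          rw [mul_pow, Real.sq_sqrt (by positivity), Finset.sum_const, Finset.card_range,
            nsmul_eq_mul, mul_assoc _ (n : ℝ)]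
  rw [← ofReal_lpNorm (hLp n)]
  exact ENNReal.ofReal_le_ofReal (le_of_sq_le_sq hsq (by positivity))

end Martingale

/-! ### Closeness of measures against a weight -/

/-- `μ` and `ν` differ by at most `b` on every measurable `f` with `0 < f ≤ V`: the distance in
which condition (B1') measures convergence. Nothing forces such an `f` to be `μ`-integrable, in
which case its integral is `0`. -/
def WeightedClose {α : Type*} [MeasurableSpace α] (V : α → ℝ) (b : ℝ) (μ ν : Measure α) : Prop :=
  ∀ f : α → ℝ, Measurable f → (∀ y, 0 < f y) → (∀ y, f y ≤ V y) →
    |(∫ y, f y ∂μ) - ∫ y, f y ∂ν| ≤ b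

namespace WeightedClose

variable {α : Type*} [MeasurableSpace α] {V : α → ℝ} {b : ℝ} {μ ν : Measure α}

lemma integral_le (hclose : WeightedClose V b μ ν) (hV : Measurable V) (hVpos : ∀ y, 0 < V y) :
    ∫ y, V y ∂μ ≤ ∫ y, V y ∂ν + b := by
  linarith [(abs_le.1 (hclose V hV hVpos fun y => le_rfl)).2]

lemma integral_min_le (hclose : WeightedClose V b μ ν) (hV : Measurable V)
    (hVpos : ∀ y, 0 < V y) (hVν : Integrable V ν) (N : ℕ) :
    ∫ y, min (V y) (N + 1) ∂μ ≤ ∫ y, V y ∂ν + b := by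
  have hpos : ∀ y, 0 < min (V y) (N + 1) := fun y => lt_min (hVpos y) (by positivity)
  have hle : ∫ y, min (V y) (N + 1) ∂ν ≤ ∫ y, V y ∂ν :=
    integral_mono_of_nonneg (ae_of_all _ fun y => (hpos y).le) hVν
      (ae_of_all _ fun y => min_le_left _ _)
  have h := hclose _ (hV.min measurable_const) hpos fun y => min_le_left _ _
  linarith [(abs_le.1 h).2]

variable [IsFiniteMeasure μ]

lemma lintegral_le (hclose : WeightedClose V b μ ν) (hV : Measurable V)
    (hVpos : ∀ y, 0 < V y) (hVν : Integrable V ν) :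
    ∫⁻ y, ENNReal.ofReal (V y) ∂μ ≤ ENNReal.ofReal (∫ y, V y ∂ν + b) := by
  have hmono : Monotone fun (N : ℕ) y => ENNReal.ofReal (min (V y) (N + 1)) := fun N N' h y =>
    ENNReal.ofReal_le_ofReal (by gcongr)
  have hsup : ∀ y, ⨆ N : ℕ, ENNReal.ofReal (min (V y) (N + 1)) = ENNReal.ofReal (V y) := by
    intro y
    refine le_antisymm (iSup_le fun N => ENNReal.ofReal_le_ofReal (min_le_left _ _)) ?_
    obtain ⟨N, hN⟩ := exists_nat_ge (V y)
    exact le_iSup_of_le N (by rw [min_eq_left (by linarith)])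
  calc ∫⁻ y, ENNReal.ofReal (V y) ∂μ
      = ⨆ N : ℕ, ∫⁻ y, ENNReal.ofReal (min (V y) (N + 1)) ∂μ := by
        rw [← lintegral_iSup (fun N => by fun_prop) hmono]
        simp only [hsup]
    _ ≤ ENNReal.ofReal (∫ y, V y ∂ν + b) := iSup_le fun N => by
        have hpos : ∀ y, 0 ≤ min (V y) (N + 1) := fun y => le_min (hVpos y).le (by positivity)
        have hint : Integrable (fun y => min (V y) (N + 1)) μ :=
          Integrable.of_bound (by fun_prop) (N + 1 : ℝ) (ae_of_all _ fun y => by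
            rw [Real.norm_of_nonneg (hpos y)]
            exact min_le_right _ _)
        rw [← ofReal_integral_eq_lintegral_ofReal hint (ae_of_all _ hpos)]
        exact ENNReal.ofReal_le_ofReal (hclose.integral_min_le hV hVpos hVν N)

lemma integrable (hclose : WeightedClose V b μ ν) (hV : Measurable V)
    (hVpos : ∀ y, 0 < V y) (hVν : Integrable V ν) : Integrable V μ := by
  refine ⟨hV.aestronglyMeasurable, ?_⟩
  rw [hasFiniteIntegral_iff_ofReal (ae_of_all _ fun y => (hVpos y).le)]
  exact (hclose.lintegral_le hV hVpos hVν).trans_lt ENNReal.ofReal_lt_top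

-- `h = 3 f - 2 V` with `f = (2 V + h) / 3`, and both `f` and `V` are admissible.
lemma abs_integral_sub_le (hclose : WeightedClose V b μ ν) (hV : Measurable V)
    (hVpos : ∀ y, 0 < V y) (hVν : Integrable V ν) {h : α → ℝ} (hh : Measurable h)
    (hhV : ∀ y, |h y| ≤ V y) : |(∫ y, h y ∂μ) - ∫ y, h y ∂ν| ≤ 5 * b := by
  have hshift : ∀ {ρ : Measure α}, Integrable V ρ →
      ∫ y, (2 * V y + h y) / 3 ∂ρ = (2 * (∫ y, V y ∂ρ) + ∫ y, h y ∂ρ) / 3 := fun hVρ => by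
    have hhρ := hVρ.mono' hh.aestronglyMeasurable (ae_of_all _ hhV)
    rw [integral_div, integral_add (hVρ.const_mul 2) hhρ, integral_const_mul]
  have hf := hclose (fun y => (2 * V y + h y) / 3) (by fun_prop)
    (fun y => by linarith [hVpos y, (abs_le.1 (hhV y)).1])
    (fun y => by linarith [(abs_le.1 (hhV y)).2])
  rw [hshift (hclose.integrable hV hVpos hVν), hshift hVν] at hf
  have hVV := hclose V hV hVpos fun y => le_rfl
  rw [abs_le] at hf hVV ⊢
  constructor <;> linarith

end WeightedClose

/-! ### The Poisson equation for a kernel -/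

/-- `U ≥ 1` is a weight with `κ U ≤ C U`. The factor `C` may exceed `1`, so this controls the growth
of `U` along the powers of `κ` and expresses no contraction. -/
structure DriftBound {α : Type*} [MeasurableSpace α] (κ : Kernel α α) (U : α → ℝ) (C : ℝ) :
    Prop where
  measurable : Measurable U
  one_le : ∀ y, 1 ≤ U y
  const_nonneg : 0 ≤ C
  integrable : ∀ y, Integrable U (κ y)
  integral_le : ∀ y, ∫ z, U z ∂κ y ≤ C * U y

instance isMarkovKernel_pow {α : Type*} [MeasurableSpace α] (κ : Kernel α α) [IsMarkovKernel κ]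
    (n : ℕ) : IsMarkovKernel (κ ^ n) := by
  induction n with
  | zero => exact inferInstanceAs (IsMarkovKernel Kernel.id)
  | succ n ih => exact inferInstanceAs (IsMarkovKernel ((κ ^ n) ∘ₖ κ))

namespace DriftBound

variable {α : Type*} [MeasurableSpace α] {κ η : Kernel α α} {U h : α → ℝ} {C C' a : ℝ}

lemma pos (hκ : DriftBound κ U C) (y : α) : 0 < U y := one_pos.trans_le (hκ.one_le y)

lemma integrable_of_abs_le (hκ : DriftBound κ U C) (hh : Measurable h)
    (hhU : ∀ y, |h y| ≤ a * U y) (y : α) : Integrable h (κ y) :=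
  ((hκ.integrable y).const_mul a).mono' hh.aestronglyMeasurable (ae_of_all _ hhU)

lemma abs_integral_le (hκ : DriftBound κ U C) (ha : 0 ≤ a) (hhU : ∀ y, |h y| ≤ a * U y) (y : α) :
    |∫ z, h z ∂κ y| ≤ a * C * U y :=
  calc |∫ z, h z ∂κ y| = ‖∫ z, h z ∂κ y‖ := (Real.norm_eq_abs _).symm
    _ ≤ ∫ z, a * U z ∂κ y :=
        norm_integral_le_of_norm_le ((hκ.integrable y).const_mul a) (ae_of_all _ hhU)
    _ = a * ∫ z, U z ∂κ y := integral_const_mul _ _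
    _ ≤ a * (C * U y) := by
        gcongr
        exact hκ.integral_le y
    _ = a * C * U y := by ring

lemma integral_sub_const [IsMarkovKernel κ] (hκ : DriftBound κ U C) (hh : Measurable h)
    (hhU : ∀ y, |h y| ≤ a * U y) (c : ℝ) (y : α) : ∫ z, (h z - c) ∂κ y = (∫ z, h z ∂κ y) - c := by
  rw [integral_sub (hκ.integrable_of_abs_le hh hhU y) (integrable_const c), integral_const,
    probReal_univ, one_smul]

lemma id (hU : Measurable U) (hU1 : ∀ y, 1 ≤ U y) : DriftBound (Kernel.id : Kernel α α) U 1 where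
  measurable := hU
  one_le := hU1
  const_nonneg := zero_le_one
  integrable y := by
    rw [Kernel.id_apply]
    exact integrable_dirac' hU.stronglyMeasurable (by finiteness)
  integral_le y := by
    rw [Kernel.id_apply, integral_dirac' _ _ hU.stronglyMeasurable, one_mul]

lemma comp (hη : DriftBound η U C') (hκ : DriftBound κ U C) :
    DriftBound (η ∘ₖ κ) U (C' * C) := by
  have hint : ∀ y, Integrable U ((η ∘ₖ κ) y) := fun y => by
    rw [integrable_comp_iff hκ.measurable.aestronglyMeasurable]
    refine ⟨ae_of_all _ hη.integrable, hκ.integrable_of_abs_le (a := C') ?_ (fun z => ?_) y⟩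
    · exact hκ.measurable.norm.stronglyMeasurable.integral_kernel.measurable
    · have hU : ∀ z, ‖U z‖ = U z := fun z => Real.norm_of_nonneg (hκ.pos z).le
      simp only [hU]
      rw [abs_of_nonneg (integral_nonneg fun z => (hκ.pos z).le)]
      exact hη.integral_le z
  refine ⟨hκ.measurable, hκ.one_le, mul_nonneg hη.const_nonneg hκ.const_nonneg, hint, fun y => ?_⟩
  calc ∫ z, U z ∂(η ∘ₖ κ) y = ∫ z, ∫ w, U w ∂η z ∂κ y := Kernel.integral_comp (hint y)
    _ ≤ |∫ z, ∫ w, U w ∂η z ∂κ y| := le_abs_self _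
    _ ≤ C' * C * U y := hκ.abs_integral_le hη.const_nonneg (fun z => ?_) y
  rw [abs_of_nonneg (integral_nonneg fun w => (hκ.pos w).le)]
  exact hη.integral_le z

lemma pow (hκ : DriftBound κ U C) (n : ℕ) : DriftBound (κ ^ n) U (C ^ n) := by
  induction n with
  | zero => exact id hκ.measurable hκ.one_le
  | succ n ih => exact ih.comp hκ

end DriftBound

/-- The candidate `∑ₙ κⁿ h` for a solution `G` of the Poisson equation `G - κ G = h`. -/
def poissonSeries {α : Type*} [MeasurableSpace α] (κ : Kernel α α) (h : α → ℝ) (y : α) : ℝ :=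
  ∑' n, ∫ z, h z ∂(κ ^ n) y

section PoissonEquation

variable {α : Type*} [MeasurableSpace α] {κ : Kernel α α} {U h : α → ℝ} {b : ℕ → ℝ}

lemma integral_pow_zero (hh : Measurable h) (y : α) : ∫ z, h z ∂(κ ^ 0) y = h y :=
  integral_dirac' _ _ hh.stronglyMeasurable

lemma summable_integral_pow (hb : Summable b)
    (hdecay : ∀ n y, |∫ z, h z ∂(κ ^ n) y| ≤ b n * U y) (y : α) :
    Summable fun n => ∫ z, h z ∂(κ ^ n) y :=
  Summable.of_norm_bounded (hb.mul_right (U y)) fun n => hdecay n y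

lemma abs_poissonSeries_le (hb : Summable b)
    (hdecay : ∀ n y, |∫ z, h z ∂(κ ^ n) y| ≤ b n * U y) (y : α) :
    |poissonSeries κ h y| ≤ (∑' n, b n) * U y := by
  rw [← tsum_mul_right, ← Real.norm_eq_abs]
  exact tsum_of_norm_bounded (hb.mul_right (U y)).hasSum fun n => hdecay n y

lemma measurable_poissonSeries (hh : Measurable h) (hb : Summable b)
    (hdecay : ∀ n y, |∫ z, h z ∂(κ ^ n) y| ≤ b n * U y) : Measurable (poissonSeries κ h) := by
  refine measurable_of_tendsto_metrizable
    (f := fun N y => ∑ n ∈ Finset.range N, ∫ z, h z ∂(κ ^ n) y) (fun N => ?_) ?_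
  · exact Finset.measurable_sum _ fun n _ => hh.stronglyMeasurable.integral_kernel.measurable
  · exact tendsto_pi_nhds.2 fun y =>
      (summable_integral_pow hb hdecay y).hasSum.tendsto_sum_nat

lemma integral_poissonSeries {C : ℝ} (hκ : DriftBound κ U C)
    (hh : Measurable h) (hb : Summable b) (hdecay : ∀ n y, |∫ z, h z ∂(κ ^ n) y| ≤ b n * U y)
    (y : α) : ∫ z, poissonSeries κ h z ∂κ y = poissonSeries κ h y - h y := by
  have hhU : ∀ z, |h z| ≤ b 0 * U z := fun z => by
    simpa only [integral_pow_zero hh] using hdecay 0 z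
  have hstep : ∀ n, ∫ z, ∫ w, h w ∂(κ ^ n) z ∂κ y = ∫ z, h z ∂(κ ^ (n + 1)) y := fun n =>
    (Kernel.integral_comp ((hκ.pow (n + 1)).integrable_of_abs_le hh hhU y)).symm
  have hsum : HasSum (fun n => ∫ z, ∫ w, h w ∂(κ ^ n) z ∂κ y)
      (∫ z, poissonSeries κ h z ∂κ y) :=
    hasSum_integral_of_dominated_convergence (fun n z => b n * U z)
      (fun n => hh.stronglyMeasurable.integral_kernel.aestronglyMeasurable)
      (fun n => ae_of_all _ (hdecay n)) (ae_of_all _ fun z => hb.mul_right (U z))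
      (by simpa only [tsum_mul_right] using (hκ.integrable y).const_mul _)
      (ae_of_all _ fun z => (summable_integral_pow hb hdecay z).hasSum)
  simp only [hstep] at hsum
  rw [← hsum.tsum_eq, poissonSeries, (summable_integral_pow hb hdecay y).tsum_eq_zero_add,
    integral_pow_zero hh]
  ring

end PoissonEquation

/-! ### The Markov property -/

namespace MarkovChain

variable {𝒳 : Type} [MeasurableSpace 𝒳] (M : MarkovChain 𝒳)

instance isMarkovKernel_K : IsMarkovKernel M.K := M.isMarkov

instance isProbabilityMeasure_law (x : 𝒳) : IsProbabilityMeasure (M.law x) := M.law_prob x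

/-- The natural filtration of the coordinate process on path space, in the form in which the Markov
property of `MarkovChain` is stated. -/
def pastFiltration (𝒳 : Type) [MeasurableSpace 𝒳] :
    Filtration ℕ (inferInstance : MeasurableSpace (ℕ → 𝒳)) where
  seq n := MeasurableSpace.comap (fun (ω : ℕ → 𝒳) (i : Fin (n + 1)) => ω i) inferInstance
  mono' m n hmn := by
    have hrestrict : Measurable fun (w : Fin (n + 1) → 𝒳) (i : Fin (m + 1)) =>
        w (Fin.castLE (by omega) i) := by fun_prop
    rintro _ ⟨s, hs, rfl⟩
    exact ⟨_, hrestrict hs, rfl⟩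
  le' n := Measurable.comap_le (by fun_prop)

lemma measurable_eval_pastFiltration {k n : ℕ} (hkn : k ≤ n) :
    Measurable[pastFiltration 𝒳 n] fun ω : ℕ → 𝒳 => ω k :=
  (measurable_pi_apply (⟨k, by omega⟩ : Fin (n + 1))).comp
    (comap_measurable fun (ω : ℕ → 𝒳) (i : Fin (n + 1)) => ω i)

-- `law_zero` is an outer-measure statement: `{x}` need not be measurable.
lemma map_eval_zero (x : 𝒳) : (M.law x).map (fun ω => ω 0) = Measure.dirac x := by
  have hfull : ∀ s : Set 𝒳, MeasurableSet s → x ∈ s → (M.law x).map (fun ω => ω 0) s = 1 := by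
    intro s hs hxs
    rw [Measure.map_apply (by fun_prop) hs]
    refine le_antisymm prob_le_one (M.law_zero x ▸ measure_mono ?_)
    rintro ω (rfl : ω 0 = x)
    exact hxs
  have : IsProbabilityMeasure ((M.law x).map fun ω => ω 0) :=
    Measure.isProbabilityMeasure_map (measurable_pi_apply 0).aemeasurable
  ext s hs
  by_cases hxs : x ∈ s
  · simp [hfull s hs hxs, hxs]
  · rw [(prob_compl_eq_one_iff hs).1 (hfull sᶜ hs.compl hxs), Measure.dirac_apply' x hs]
    simp [hxs]

lemma map_restrict_eval_eval_succ (x : 𝒳) {n : ℕ} {B : Set (ℕ → 𝒳)}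
    (hB : MeasurableSet[pastFiltration 𝒳 n] B) :
    ((M.law x).restrict B).map (fun ω => (ω n, ω (n + 1)))
      = ((M.law x).restrict B).map (fun ω => ω n) ⊗ₘ M.K := by
  refine Measure.ext_prod fun {s t} hs ht => ?_
  have hBs : MeasurableSet[pastFiltration 𝒳 n] (B ∩ (fun ω => ω n) ⁻¹' s) :=
    hB.inter (measurable_eval_pastFiltration le_rfl hs)
  have hXs : MeasurableSet ((fun ω : ℕ → 𝒳 => ω n) ⁻¹' s) := hs.preimage (by fun_prop)
  rw [Measure.map_apply (by fun_prop) (hs.prod ht), Measure.compProd_apply_prod hs ht,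
    setLIntegral_map hs (M.K.measurable_coe ht) (by fun_prop), Measure.restrict_restrict hXs,
    inter_comm, ← M.law_markov x n t ht _ hBs,
    Measure.restrict_apply ((hs.prod ht).preimage (by fun_prop))]
  congr 1
  ext ω
  simp only [mem_inter_iff, mem_preimage, mem_prod, mem_ofPred_eq]
  tauto

lemma map_eval (x : 𝒳) (n : ℕ) : (M.law x).map (fun ω => ω n) = (M.K ^ n) x := by
  induction n with
  | zero => exact M.map_eval_zero x
  | succ n ih =>
    have h := M.map_restrict_eval_eval_succ x (n := n) MeasurableSet.univ
    rw [Measure.restrict_univ] at h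
    calc (M.law x).map (fun ω => ω (n + 1))
        = ((M.law x).map fun ω => (ω n, ω (n + 1))).snd := by
          rw [Measure.snd, Measure.map_map (by fun_prop) (by fun_prop)]
          rfl
      _ = M.K ∘ₘ (M.K ^ n) x := by rw [h, Measure.snd_compProd, ih]
      _ = (M.K ^ (n + 1)) x := by rw [pow_succ']; exact (Kernel.comp_apply _ _ _).symm

lemma integral_eval (x : 𝒳) (n : ℕ) {f : 𝒳 → ℝ} (hf : Measurable f) :
    ∫ ω, f (ω n) ∂M.law x = ∫ y, f y ∂(M.K ^ n) x := by
  rw [← map_eval, integral_map (measurable_pi_apply n).aemeasurable hf.aestronglyMeasurable]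

lemma measurable_gtilde {g : 𝒳 → 𝒳 → ℝ} (hg : Measurable fun q : 𝒳 × 𝒳 => g q.1 q.2) :
    Measurable (M.gtilde g) :=
  ((hg.comp measurable_swap).stronglyMeasurable.integral_kernel_prod_right' (κ := M.K)).measurable

variable {g : 𝒳 → 𝒳 → ℝ} {x : 𝒳} {n : ℕ}

lemma integrable_and_setIntegral_gtilde (hg : Measurable fun q : 𝒳 × 𝒳 => g q.1 q.2)
    (hint : Integrable (fun ω => g (ω (n + 1)) (ω n)) (M.law x)) {B : Set (ℕ → 𝒳)}
    (hB : MeasurableSet[pastFiltration 𝒳 n] B) :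
    IntegrableOn (fun ω => M.gtilde g (ω n)) B (M.law x) ∧
      ∫ ω in B, M.gtilde g (ω n) ∂M.law x = ∫ ω in B, g (ω (n + 1)) (ω n) ∂M.law x := by
  have hg' : Measurable fun q : 𝒳 × 𝒳 => g q.2 q.1 := hg.comp measurable_swap
  have hpair : AEMeasurable (fun ω : ℕ → 𝒳 => (ω n, ω (n + 1))) ((M.law x).restrict B) := by
    fun_prop
  have hprod : Integrable (fun q : 𝒳 × 𝒳 => g q.2 q.1)
      (((M.law x).restrict B).map (fun ω => ω n) ⊗ₘ M.K) := by
    rw [← M.map_restrict_eval_eval_succ x hB]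
    exact (integrable_map_measure hg'.aestronglyMeasurable hpair).2 hint.restrict
  constructor
  · exact (integrable_map_measure (M.measurable_gtilde hg).aestronglyMeasurable
      (measurable_pi_apply n).aemeasurable).1 hprod.integral_compProd
  · calc ∫ ω in B, M.gtilde g (ω n) ∂M.law x
        = ∫ u, M.gtilde g u ∂((M.law x).restrict B).map (fun ω => ω n) :=
          (integral_map (measurable_pi_apply n).aemeasurable
            (M.measurable_gtilde hg).aestronglyMeasurable).symm
      _ = ∫ q, g q.2 q.1 ∂((M.law x).restrict B).map (fun ω => (ω n, ω (n + 1))) := by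
          rw [M.map_restrict_eval_eval_succ x hB, Measure.integral_compProd hprod]
          rfl
      _ = ∫ ω in B, g (ω (n + 1)) (ω n) ∂M.law x :=
          integral_map hpair hg'.aestronglyMeasurable

lemma condExp_eval_succ (hg : Measurable fun q : 𝒳 × 𝒳 => g q.1 q.2)
    (hint : Integrable (fun ω => g (ω (n + 1)) (ω n)) (M.law x)) :
    (M.law x)[fun ω => g (ω (n + 1)) (ω n) | pastFiltration 𝒳 n]
      =ᵐ[M.law x] fun ω => M.gtilde g (ω n) := by
  refine (ae_eq_condExp_of_forall_setIntegral_eq ((pastFiltration 𝒳).le n) hint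
    (fun B hB _ => (M.integrable_and_setIntegral_gtilde hg hint hB).1)
    (fun B hB _ => (M.integrable_and_setIntegral_gtilde hg hint hB).2) ?_).symm
  exact ((M.measurable_gtilde hg).comp
    (measurable_eval_pastFiltration le_rfl)).stronglyMeasurable.aestronglyMeasurable

lemma eLpNorm_gtilde_le (hg : Measurable fun q : 𝒳 × 𝒳 => g q.1 q.2) {q : ℝ≥0∞} (hq : 1 ≤ q)
    (hint : Integrable (fun ω => g (ω (n + 1)) (ω n)) (M.law x)) :
    eLpNorm (fun ω => M.gtilde g (ω n)) q (M.law x)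
      ≤ eLpNorm (fun ω => g (ω (n + 1)) (ω n)) q (M.law x) :=
  (eLpNorm_congr_ae (M.condExp_eval_succ hg hint)).symm.trans_le (eLpNorm_condExp_le_eLpNorm _ hq)

end MarkovChain

/-! ### Geometric ergodicity along an arithmetic progression -/

/-- Geometric convergence `κ ^ (p l + s) → ν` as `l → ∞`, at rate `exp (-ρ)` and relative to the
Lyapunov function `V`: condition (B1') for the residue class `s`, together with the standing
assumptions on its data. -/
structure ErgodicAlong {α : Type*} [MeasurableSpace α] (κ : Kernel α α) (p s : ℕ) (V : α → ℝ)
    (ν : Measure α) (R ρ : ℝ) : Prop where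
  measurable : Measurable V
  one_le : ∀ y, 1 ≤ V y
  integrable : Integrable V ν
  const_nonneg : 0 ≤ R
  rate_pos : 0 < ρ
  weightedClose : ∀ (l : ℕ) (y : α),
    WeightedClose V (R * V y * Real.exp (-ρ * l)) ((κ ^ (p * l + s)) y) ν

lemma mul_add_one_eq_mul_add_one_mod (p l : ℕ) : p * l + 1 = p * (l + 1 / p) + 1 % p := by
  rw [mul_add, add_assoc, Nat.div_add_mod]

section SkeletonDecay

variable {α : Type*} [MeasurableSpace α] {κ : Kernel α α} {U h : α → ℝ} {C a b ρ : ℝ}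

lemma abs_integral_pow_add_le (hκ : DriftBound κ U C) (hh : Measurable h)
    (hhU : ∀ y, |h y| ≤ a * U y) (hb : 0 ≤ b) {k : ℕ}
    (hk : ∀ y, |∫ z, h z ∂(κ ^ k) y| ≤ b * U y) (m : ℕ) (y : α) :
    |∫ z, h z ∂(κ ^ (k + m)) y| ≤ b * C ^ m * U y := by
  have hint := (hκ.pow (k + m)).integrable_of_abs_le hh hhU y
  rw [pow_add] at hint ⊢
  exact (congrArg abs (Kernel.integral_comp hint)).trans_le ((hκ.pow m).abs_integral_le hb hk y)

lemma exp_neg_mul_le_of_le {p l n : ℕ} (hp : 0 < p) (hρ : 0 ≤ ρ) (hn : n ≤ p * (l + 2)) :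
    Real.exp (-ρ * l) ≤ Real.exp (2 * ρ) * Real.exp (-ρ / p) ^ n := by
  have hdiv : (n : ℝ) / p ≤ l + 2 := by
    rw [div_le_iff₀' (by positivity)]
    exact_mod_cast hn
  rw [← Real.exp_nat_mul, ← Real.exp_add, Real.exp_le_exp]
  calc -ρ * l = 2 * ρ - ρ * (l + 2) := by ring
    _ ≤ 2 * ρ - ρ * (n / p) := by gcongr
    _ = 2 * ρ + n * (-ρ / p) := by ring

lemma abs_integral_pow_le_of_skeleton {p : ℕ} (hp : 0 < p) (hρ : 0 ≤ ρ) (hκ : DriftBound κ U C)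
    (hh : Measurable h) (ha : 0 ≤ a) (hhU : ∀ y, |h y| ≤ a * U y) (hb : 0 ≤ b)
    (hskel : ∀ (l : ℕ) y, |∫ z, h z ∂(κ ^ (p * l + 1)) y| ≤ b * Real.exp (-ρ * l) * U y)
    (n : ℕ) (y : α) :
    |∫ z, h z ∂(κ ^ n) y|
      ≤ (a + b * Real.exp (2 * ρ) * (1 + C) ^ p) * Real.exp (-ρ / p) ^ n * U y := by
  have hC := hκ.const_nonneg
  have hU := (hκ.pos y).le
  rcases n with _ | n
  · rw [integral_pow_zero hh, pow_zero, mul_one]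
    refine (hhU y).trans ?_
    gcongr
    exact le_add_of_nonneg_right (by positivity)
  · have hn : p * (n / p) + 1 + n % p = n + 1 := by have := Nat.div_add_mod n p; omega
    have hmod : n % p < p := Nat.mod_lt _ hp
    have hexp := exp_neg_mul_le_of_le (l := n / p) (n := n + 1) hp hρ (by rw [mul_add]; omega)
    calc |∫ z, h z ∂(κ ^ (n + 1)) y|
        = |∫ z, h z ∂(κ ^ (p * (n / p) + 1 + n % p)) y| := by rw [hn]
      _ ≤ b * Real.exp (-ρ * (n / p : ℕ)) * C ^ (n % p) * U y :=
          abs_integral_pow_add_le hκ hh hhU (by positivity) (hskel _) _ y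
      _ ≤ b * (Real.exp (2 * ρ) * Real.exp (-ρ / p) ^ (n + 1)) * (1 + C) ^ p * U y := by
          gcongr
          calc C ^ (n % p) ≤ (1 + C) ^ (n % p) := by gcongr; linarith
            _ ≤ (1 + C) ^ p := pow_le_pow_right₀ (by linarith) hmod.le
      _ = (b * Real.exp (2 * ρ) * (1 + C) ^ p) * Real.exp (-ρ / p) ^ (n + 1) * U y := by ring
      _ ≤ _ := by
          gcongr
          exact le_add_of_nonneg_left ha

end SkeletonDecay

namespace ErgodicAlong

variable {α : Type*} [MeasurableSpace α] {κ : Kernel α α} {p s : ℕ} {V U f : α → ℝ}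
  {ν ν' : Measure α} {R R' ρ ρ' : ℝ}

lemma pos (herg : ErgodicAlong κ p s V ν R ρ) (y : α) : 0 < V y :=
  one_pos.trans_le (herg.one_le y)

lemma of_one_mod (herg : ErgodicAlong κ p (1 % p) U ν R ρ) : ErgodicAlong κ p 1 U ν R ρ := by
  refine { herg with weightedClose := fun l y f hf hpos hle => ?_ }
  rw [mul_add_one_eq_mul_add_one_mod]
  refine (herg.weightedClose (l + 1 / p) y f hf hpos hle).trans ?_
  gcongr R * U y * Real.exp ?_
  · exact mul_nonneg herg.const_nonneg (herg.pos y).le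
  · exact mul_le_mul_of_nonpos_left (by exact_mod_cast Nat.le_add_right _ _)
      (neg_nonpos.2 herg.rate_pos.le)

variable [IsMarkovKernel κ]

lemma tendsto_integral (herg : ErgodicAlong κ p s V ν R ρ) (hf : Measurable f)
    (hfV : ∀ y, |f y| ≤ V y) (y : α) :
    Tendsto (fun l => ∫ z, f z ∂(κ ^ (p * l + s)) y) atTop (nhds (∫ z, f z ∂ν)) := by
  have hexp : Tendsto (fun l : ℕ => Real.exp (-ρ * l)) atTop (nhds 0) :=
    Real.tendsto_exp_atBot.comp
      (tendsto_natCast_atTop_atTop.const_mul_atTop_of_neg (neg_neg_iff_pos.2 herg.rate_pos))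
  rw [tendsto_iff_norm_sub_tendsto_zero]
  refine squeeze_zero (fun _ => norm_nonneg _) (fun l =>
    (herg.weightedClose l y).abs_integral_sub_le herg.measurable herg.pos herg.integrable hf hfV) ?_
  simpa only [mul_zero] using (hexp.const_mul (R * V y)).const_mul 5

lemma driftBound (herg : ErgodicAlong κ p 1 U ν R ρ) : DriftBound κ U (∫ y, U y ∂ν + R) := by
  have hclose : ∀ y, WeightedClose U (R * U y) (κ y) ν := fun y => by
    simpa using herg.weightedClose 0 y
  have hν : 0 ≤ ∫ y, U y ∂ν := integral_nonneg fun y => (herg.pos y).le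
  refine ⟨herg.measurable, herg.one_le, add_nonneg hν herg.const_nonneg,
    fun y => (hclose y).integrable herg.measurable herg.pos herg.integrable, fun y => ?_⟩
  calc ∫ z, U z ∂κ y ≤ ∫ z, U z ∂ν + R * U y := (hclose y).integral_le herg.measurable herg.pos
    _ ≤ (∫ z, U z ∂ν) * U y + R * U y := by
        gcongr
        exact le_mul_of_one_le_right hν (herg.one_le y)
    _ = (∫ z, U z ∂ν + R) * U y := by ring

lemma exists_summable_decay (herg : ErgodicAlong κ p 1 U ν R ρ) (hp : 0 < p)
    (hf : Measurable f) (hfU : ∀ y, |f y| ≤ U y) :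
    ∃ b : ℕ → ℝ, Summable b ∧ (∀ n, 0 ≤ b n) ∧
      ∀ n y, |∫ z, (f z - ∫ w, f w ∂ν) ∂(κ ^ n) y| ≤ b n * U y := by
  set c := ∫ w, f w ∂ν
  have hR := herg.const_nonneg
  have hκ := herg.driftBound
  have hC := hκ.const_nonneg
  have hcentered : ∀ y, |f y - c| ≤ (1 + |c|) * U y := fun y =>
    calc |f y - c| ≤ |f y| + |c| := abs_sub _ _
      _ ≤ U y + |c| * U y :=
          add_le_add (hfU y) (le_mul_of_one_le_right (abs_nonneg c) (herg.one_le y))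
      _ = (1 + |c|) * U y := by ring
  have hskel : ∀ (l : ℕ) y,
      |∫ z, (f z - c) ∂(κ ^ (p * l + 1)) y| ≤ 5 * R * Real.exp (-ρ * l) * U y := fun l y =>
    calc |∫ z, (f z - c) ∂(κ ^ (p * l + 1)) y|
        = |(∫ z, f z ∂(κ ^ (p * l + 1)) y) - c| := by
          rw [(hκ.pow _).integral_sub_const (a := 1) hf (by simpa using hfU)]
      _ ≤ 5 * (R * U y * Real.exp (-ρ * l)) := (herg.weightedClose l y).abs_integral_sub_le
          herg.measurable herg.pos herg.integrable hf hfU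
      _ = 5 * R * Real.exp (-ρ * l) * U y := by ring
  have hrate : -ρ / p < 0 :=
    div_neg_of_neg_of_pos (neg_neg_iff_pos.2 herg.rate_pos) (by exact_mod_cast hp)
  exact ⟨_, (summable_geometric_of_lt_one (Real.exp_pos _).le
      (Real.exp_lt_one_iff.2 hrate)).mul_left _, fun n => by positivity,
    abs_integral_pow_le_of_skeleton hp herg.rate_pos.le hκ (hf.sub_const c) (by positivity)
      hcentered (by positivity) hskel⟩

lemma integral_eq [Nonempty α] (herg : ErgodicAlong κ p 1 U ν R ρ)
    (herg' : ErgodicAlong κ p s V ν' R' ρ') (hp : 0 < p) (hf : Measurable f)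
    (hfU : ∀ y, |f y| ≤ U y) (hfV : ∀ y, |f y| ≤ V y) : ∫ z, f z ∂ν' = ∫ z, f z ∂ν := by
  obtain ⟨y⟩ := ‹Nonempty α›
  obtain ⟨b, hb, -, hdecay⟩ := herg.exists_summable_decay hp hf hfU
  have hlim : Tendsto (fun n => ∫ z, f z ∂(κ ^ n) y) atTop (nhds (∫ z, f z ∂ν)) := by
    refine tendsto_sub_nhds_zero_iff.1
      ((summable_integral_pow hb hdecay y).tendsto_atTop_zero.congr fun n => ?_)
    exact (herg.driftBound.pow n).integral_sub_const (a := 1) hf (by simpa using hfU) _ y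
  refine tendsto_nhds_unique (herg'.tendsto_integral hf hfV y) (hlim.comp ?_)
  exact tendsto_atTop_mono (fun l => le_add_right (Nat.le_mul_of_pos_left l hp)) tendsto_id

lemma average_integral_eq [Nonempty α] {V : Fin p → α → ℝ} {lam : Fin p → Measure α}
    {R' ρ' : Fin p → ℝ} (herg : ErgodicAlong κ p 1 U ν R ρ)
    (herg' : ∀ ι : Fin p, ErgodicAlong κ p ι (V ι) (lam ι) (R' ι) (ρ' ι)) (hp : 0 < p)
    (hf : Measurable f) (hfU : ∀ y, |f y| ≤ U y) (hfV : ∀ y ι, |f y| ≤ V ι y) :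
    (1 / (p : ℝ)) * ∑ ι, ∫ y, f y ∂lam ι = ∫ y, f y ∂ν := by
  have hmean : ∀ ι, ∫ y, f y ∂lam ι = ∫ y, f y ∂ν := fun ι =>
    herg.integral_eq (herg' ι) hp hf hfU (hfV · ι)
  simp only [hmean, Finset.sum_const, Finset.card_univ, Fintype.card_fin, nsmul_eq_mul]
  field_simp

lemma exists_poisson (herg : ErgodicAlong κ p 1 U ν R ρ) (hp : 0 < p) (hf : Measurable f)
    (hfU : ∀ y, |f y| ≤ U y) :
    ∃ (A : ℝ) (G : α → ℝ), 0 ≤ A ∧ Measurable G ∧ (∀ y, |G y| ≤ A * U y) ∧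
      ∀ y, ∫ z, G z ∂κ y = G y - (f y - ∫ z, f z ∂ν) := by
  obtain ⟨b, hb, hb0, hdecay⟩ := herg.exists_summable_decay hp hf hfU
  exact ⟨_, _, tsum_nonneg hb0, measurable_poissonSeries (hf.sub_const _) hb hdecay,
    abs_poissonSeries_le hb hdecay,
    integral_poissonSeries herg.driftBound (hf.sub_const _) hb hdecay⟩

end ErgodicAlong

/-! ### Martingale approximation -/

/-- `W_n(g) = ∑_{1 ≤ j ≤ n} g(X_j, X_{j-1})` as a functional of the path; the index is shifted to
start at `0`. -/
def transitionSum {α : Type*} (g : α → α → ℝ) (n : ℕ) (ω : ℕ → α) : ℝ :=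
  ∑ j ∈ Finset.range n, g (ω (j + 1)) (ω j)

/-- The increment of the martingale that approximates `W_n(g) - n c`: the coboundary of `G`, a
solution of the Poisson equation for `g̃ - c`, is added to `g - c`. -/
def correctedStep {α : Type*} (g : α → α → ℝ) (c : ℝ) (G : α → ℝ) (v u : α) : ℝ :=
  g v u - c + (G v - G u)

section TransitionSum

variable {α : Type*}

lemma transitionSum_succ_sub (g : α → α → ℝ) (n : ℕ) :
    transitionSum g (n + 1) - transitionSum g n = fun ω => g (ω (n + 1)) (ω n) := by
  ext ω
  simp [transitionSum, Finset.sum_range_succ]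

lemma transitionSum_sub_eq (g : α → α → ℝ) (c : ℝ) (G : α → ℝ) (n : ℕ) (ω : ℕ → α) :
    transitionSum g n ω - n * c
      = transitionSum (correctedStep g c G) n ω + (G (ω 0) - G (ω n)) := by
  have htele := Finset.sum_range_sub (fun j => G (ω j)) n
  simp only [transitionSum, correctedStep]
  rw [Finset.sum_add_distrib, htele, Finset.sum_sub_distrib, Finset.sum_const, Finset.card_range,
    nsmul_eq_mul]
  ring

end TransitionSum

lemma integrable_of_eLpNorm_le_ofReal {Ω : Type*} [MeasurableSpace Ω] {μ : Measure Ω}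
    [IsFiniteMeasure μ] {f : Ω → ℝ} (hf : Measurable f) {q : ℝ≥0∞} (hq : 1 ≤ q) {b : ℝ}
    (hb : eLpNorm f q μ ≤ ENNReal.ofReal b) : Integrable f μ :=
  MemLp.integrable hq ⟨hf.aestronglyMeasurable, hb.trans_lt ENNReal.ofReal_lt_top⟩

lemma eLpNorm_const_eq_enorm {Ω : Type*} [MeasurableSpace Ω] {μ : Measure Ω}
    [IsProbabilityMeasure μ] {q : ℝ≥0∞} (hq : q ≠ 0) (c : ℝ) :
    eLpNorm (fun _ => c) q μ = ‖c‖ₑ := by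
  rw [eLpNorm_const c hq (NeZero.ne μ), measure_univ, ENNReal.one_rpow, mul_one]

lemma eLpNorm_le_ofReal_iff {Ω : Type*} [MeasurableSpace Ω] {μ : Measure Ω} {f : Ω → ℝ} {r b : ℝ}
    (hr : 0 < r) (hb : 0 ≤ b) :
    eLpNorm f (ENNReal.ofReal r) μ ≤ ENNReal.ofReal b
      ↔ ∫⁻ ω, ENNReal.ofReal (|f ω| ^ r) ∂μ ≤ ENNReal.ofReal (b ^ r) := by
  have habs : ∀ ω, ENNReal.ofReal (|f ω| ^ r) = ‖f ω‖ₑ ^ r := fun ω => by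
    rw [Real.enorm_eq_ofReal_abs, ENNReal.ofReal_rpow_of_nonneg (abs_nonneg _) hr.le]
  simp only [habs]
  rw [← eLpNorm_ofReal_rpow hr, ← ENNReal.ofReal_rpow_of_nonneg hb hr.le,
    ENNReal.rpow_le_rpow_iff hr]

lemma ofReal_mul_div_sqrt_rpow {a t r : ℝ} (ha : 0 ≤ a) (ht : 0 ≤ t) {n : ℕ} (hn : 0 < n)
    (hr : 0 ≤ r) :
    ENNReal.ofReal ((a * t / √n) ^ r)
      = ENNReal.ofReal (a ^ r) * ENNReal.ofReal (t ^ r) / (n : ℝ≥0∞) ^ (r / 2) := by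
  have hsqrt : √(n : ℝ) ^ r = (n : ℝ) ^ (r / 2) := by
    rw [Real.sqrt_eq_rpow, ← Real.rpow_mul n.cast_nonneg, one_div_mul_eq_div]
  rw [Real.div_rpow (by positivity) (by positivity), Real.mul_rpow ha ht, hsqrt,
    ENNReal.ofReal_div_of_pos (by positivity), ENNReal.ofReal_mul (by positivity),
    ← ENNReal.ofReal_rpow_of_nonneg n.cast_nonneg (by positivity), ENNReal.ofReal_natCast]

namespace MarkovChain

variable {𝒳 : Type} [MeasurableSpace 𝒳] {M : MarkovChain 𝒳} {x : 𝒳}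

lemma measurable_step {d : 𝒳 → 𝒳 → ℝ} (hd : Measurable fun q : 𝒳 × 𝒳 => d q.1 q.2) (j : ℕ) :
    Measurable fun ω : ℕ → 𝒳 => d (ω (j + 1)) (ω j) :=
  hd.comp (f := fun ω : ℕ → 𝒳 => (ω (j + 1), ω j)) (by fun_prop)

section MartingaleDifference

variable {d : 𝒳 → 𝒳 → ℝ}

lemma martingale_transitionSum (hd : Measurable fun q : 𝒳 × 𝒳 => d q.1 q.2)
    (hd0 : ∀ u, M.gtilde d u = 0)
    (hint : ∀ j, Integrable (fun ω => d (ω (j + 1)) (ω j)) (M.law x)) :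
    Martingale (transitionSum d) (pastFiltration 𝒳) (M.law x) := by
  refine martingale_of_condExp_sub_eq_zero_nat (fun n => ?_)
    (fun n => integrable_finsetSum _ fun j _ => hint j) fun n => ?_
  · refine (Finset.measurable_sum _ fun j hj => ?_).stronglyMeasurable
    have hjn := Finset.mem_range.1 hj
    exact hd.comp ((measurable_eval_pastFiltration hjn).prodMk
      (measurable_eval_pastFiltration hjn.le))
  · rw [transitionSum_succ_sub]
    filter_upwards [M.condExp_eval_succ hd (hint n)] with ω hω
    rw [hω, hd0, Pi.zero_apply]

lemma eLpNorm_transitionSum_le {r b : ℝ} (hr : 2 ≤ r) (hb : 0 ≤ b)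
    (hd : Measurable fun q : 𝒳 × 𝒳 => d q.1 q.2) (hd0 : ∀ u, M.gtilde d u = 0)
    (hbound : ∀ j, eLpNorm (fun ω => d (ω (j + 1)) (ω j)) (ENNReal.ofReal r) (M.law x)
      ≤ ENNReal.ofReal b) (n : ℕ) :
    eLpNorm (transitionSum d n) (ENNReal.ofReal r) (M.law x)
      ≤ ENNReal.ofReal (√(2 * expansionConst r * n) * b) := by
  have hr1 : 1 ≤ ENNReal.ofReal r := ENNReal.one_le_ofReal.2 (by linarith)
  have hmart := M.martingale_transitionSum (x := x) hd hd0 fun j =>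
    integrable_of_eLpNorm_le_ofReal (measurable_step hd j) hr1 (hbound j)
  refine martingale_eLpNorm_le hr hb hmart ?_ (fun j => ?_) n
  · ext
    simp [transitionSum]
  · rw [transitionSum_succ_sub]
    exact hbound j

end MartingaleDifference

/-- `G` solves the Poisson equation `G - K G = g̃ - c`. -/
structure SolvesPoisson (M : MarkovChain 𝒳) (g : 𝒳 → 𝒳 → ℝ) (c : ℝ) (G : 𝒳 → ℝ) : Prop where
  measurable : Measurable G
  integrable : ∀ u, Integrable G (M.K u)
  integral_eq : ∀ u, ∫ v, G v ∂M.K u = G u - (M.gtilde g u - c)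

lemma exists_solvesPoisson {g : 𝒳 → 𝒳 → ℝ} {p : ℕ} {U : 𝒳 → ℝ} {ν : Measure 𝒳} {R ρ : ℝ}
    (herg : ErgodicAlong M.K p 1 U ν R ρ) (hp : 0 < p)
    (hg : Measurable fun q : 𝒳 × 𝒳 => g q.1 q.2) (hgU : ∀ y, |M.gtilde g y| ≤ U y) :
    ∃ (A : ℝ) (G : 𝒳 → ℝ), 0 ≤ A ∧ (∀ y, |G y| ≤ A * U y) ∧
      M.SolvesPoisson g (∫ y, M.gtilde g y ∂ν) G := by
  obtain ⟨A, G, hA, hGm, hGU, hGeq⟩ := herg.exists_poisson hp (M.measurable_gtilde hg) hgU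
  exact ⟨A, G, hA, hGU, hGm, herg.driftBound.integrable_of_abs_le hGm hGU, hGeq⟩

variable {g : 𝒳 → 𝒳 → ℝ} {c : ℝ} {G : 𝒳 → ℝ}

lemma measurable_correctedStep (hg : Measurable fun q : 𝒳 × 𝒳 => g q.1 q.2) (hG : Measurable G) :
    Measurable fun q : 𝒳 × 𝒳 => correctedStep g c G q.1 q.2 := by
  unfold correctedStep
  fun_prop

lemma gtilde_correctedStep (hG : M.SolvesPoisson g c G)
    (hgInt : ∀ u, Integrable (fun v => g v u) (M.K u)) (u : 𝒳) :
    M.gtilde (correctedStep g c G) u = 0 := by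
  have hgc : Integrable (fun v => g v u - c) (M.K u) := (hgInt u).sub (integrable_const c)
  have hGc : Integrable (fun v => G v - G u) (M.K u) := (hG.integrable u).sub (integrable_const _)
  simp only [gtilde, correctedStep]
  rw [integral_add hgc hGc, integral_sub (hgInt u) (integrable_const c),
    integral_sub (hG.integrable u) (integrable_const _), hG.integral_eq, gtilde]
  simp only [integral_const, probReal_univ, one_smul]
  ring

/-! ### Moment bounds -/

section MomentBounds

variable {q : ℝ≥0∞} {t A : ℝ} {U : 𝒳 → ℝ}

lemma integrable_eval {C : ℝ} (hκ : DriftBound M.K U C) {f : 𝒳 → ℝ} (hf : Measurable f)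
    (hfU : ∀ y, |f y| ≤ A * U y) (x : 𝒳) (k : ℕ) :
    Integrable (fun ω => f (ω k)) (M.law x) := by
  have hint := (hκ.pow k).integrable_of_abs_le hf hfU x
  rw [← M.map_eval] at hint
  exact hint.comp_measurable (measurable_pi_apply k)

lemma SolvesPoisson.eLpNorm_le_add_succ (hG : M.SolvesPoisson g c G)
    (hg : Measurable fun q : 𝒳 × 𝒳 => g q.1 q.2) (hq : 1 ≤ q)
    (hstep : ∀ j, eLpNorm (fun ω => g (ω (j + 1)) (ω j)) q (M.law x) ≤ ENNReal.ofReal t)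
    (hGint : ∀ k, Integrable (fun ω => G (ω k)) (M.law x)) (k : ℕ) :
    eLpNorm (fun ω => G (ω k)) q (M.law x)
      ≤ ENNReal.ofReal t + ‖c‖ₑ + eLpNorm (fun ω => G (ω (k + 1))) q (M.law x) := by
  have hgk : Measurable fun ω : ℕ → 𝒳 => M.gtilde g (ω k) :=
    (M.measurable_gtilde hg).comp (measurable_pi_apply k)
  have hGk : Measurable fun ω : ℕ → 𝒳 => ∫ v, G v ∂M.K (ω k) :=
    hG.measurable.stronglyMeasurable.integral_kernel.measurable.comp (measurable_pi_apply k)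
  have hdecomp : (fun ω : ℕ → 𝒳 => G (ω k))
      = ((fun ω => M.gtilde g (ω k)) - fun _ => c) + fun ω => ∫ v, G v ∂M.K (ω k) := by
    ext ω
    simp only [Pi.add_apply, Pi.sub_apply, hG.integral_eq]
    ring
  have hgint := integrable_of_eLpNorm_le_ofReal (measurable_step hg k) hq (hstep k)
  rw [hdecomp]
  refine (eLpNorm_add_le (hgk.sub_const c).aestronglyMeasurable hGk.aestronglyMeasurable hq).trans
    (add_le_add ((eLpNorm_sub_le hgk.aestronglyMeasurable (by fun_prop) hq).trans ?_) ?_)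
  · exact add_le_add ((M.eLpNorm_gtilde_le hg hq hgint).trans (hstep k))
      (eLpNorm_const_eq_enorm (by positivity) c).le
  · exact M.eLpNorm_gtilde_le (g := fun v _ => G v) (hG.measurable.comp measurable_fst) hq
      (hGint (k + 1))

lemma SolvesPoisson.eLpNorm_le_add (hG : M.SolvesPoisson g c G)
    (hg : Measurable fun q : 𝒳 × 𝒳 => g q.1 q.2) (hq : 1 ≤ q)
    (hstep : ∀ j, eLpNorm (fun ω => g (ω (j + 1)) (ω j)) q (M.law x) ≤ ENNReal.ofReal t)
    (hGint : ∀ k, Integrable (fun ω => G (ω k)) (M.law x)) (k m : ℕ) :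
    eLpNorm (fun ω => G (ω k)) q (M.law x)
      ≤ m * (ENNReal.ofReal t + ‖c‖ₑ) + eLpNorm (fun ω => G (ω (k + m))) q (M.law x) := by
  induction m with
  | zero => simp
  | succ m ih =>
    refine ih.trans ((add_le_add_right
      (hG.eLpNorm_le_add_succ hg hq hstep hGint (k + m)) _).trans_eq ?_)
    rw [← add_assoc, Nat.cast_succ, add_mul, one_mul]
    rfl

-- The moments of `U` are bounded only at times `≡ 1 [MOD p]`; such a time lies at most `p + 1`
-- steps ahead of `k`, and each step towards it costs `t + |c|`.
lemma SolvesPoisson.eLpNorm_le (hG : M.SolvesPoisson g c G)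
    (hg : Measurable fun q : 𝒳 × 𝒳 => g q.1 q.2) (hq : 1 ≤ q) (ht : 1 ≤ t)
    (hstep : ∀ j, eLpNorm (fun ω => g (ω (j + 1)) (ω j)) q (M.law x) ≤ ENNReal.ofReal t)
    (hGint : ∀ k, Integrable (fun ω => G (ω k)) (M.law x)) (hA : 0 ≤ A)
    (hGU : ∀ y, |G y| ≤ A * U y) {p : ℕ} (hp : 0 < p)
    (hU : ∀ j, eLpNorm (fun ω => U (ω (p * j + 1))) q (M.law x) ≤ ENNReal.ofReal t) (k : ℕ) :
    eLpNorm (fun ω => G (ω k)) q (M.law x) ≤ ENNReal.ofReal (((p + 1) * (1 + |c|) + A) * t) := by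
  have htime : k + (p + 1 - k % p) = p * (k / p + 1) + 1 := by
    have := Nat.div_add_mod k p
    have := Nat.mod_lt k hp
    rw [mul_add]
    omega
  have hskel : eLpNorm (fun ω => G (ω (p * (k / p + 1) + 1))) q (M.law x)
      ≤ ENNReal.ofReal (A * t) := by
    rw [ENNReal.ofReal_mul hA]
    refine (eLpNorm_le_mul_eLpNorm_of_ae_le_mul (c := A) (ae_of_all _ fun ω => ?_) q).trans
      (mul_le_mul_right (hU (k / p + 1)) _)
    exact (hGU _).trans (mul_le_mul_of_nonneg_left (le_abs_self _) hA)
  calc eLpNorm (fun ω => G (ω k)) q (M.law x)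
      ≤ (p + 1 - k % p : ℕ) * (ENNReal.ofReal t + ‖c‖ₑ)
          + eLpNorm (fun ω => G (ω (p * (k / p + 1) + 1))) q (M.law x) :=
        htime ▸ hG.eLpNorm_le_add hg hq hstep hGint k (p + 1 - k % p)
    _ ≤ (p + 1 : ℕ) * (ENNReal.ofReal t + ENNReal.ofReal (|c| * t)) + ENNReal.ofReal (A * t) := by
        rw [Real.enorm_eq_ofReal_abs]
        gcongr
        · exact Nat.sub_le _ _
        · exact le_mul_of_one_le_right (abs_nonneg c) ht
    _ = ENNReal.ofReal (((p + 1) * (1 + |c|) + A) * t) := by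
        rw [← ENNReal.ofReal_natCast, ← ENNReal.ofReal_add (by positivity) (by positivity),
          ← ENNReal.ofReal_mul (by positivity),
          ← ENNReal.ofReal_add (by positivity) (by positivity)]
        congr 1
        push_cast
        ring

lemma eLpNorm_correctedStep_le (hg : Measurable fun q : 𝒳 × 𝒳 => g q.1 q.2) (hG : Measurable G)
    (hq : 1 ≤ q) (ht : 1 ≤ t) {E : ℝ} (hE : 0 ≤ E)
    (hstep : ∀ j, eLpNorm (fun ω => g (ω (j + 1)) (ω j)) q (M.law x) ≤ ENNReal.ofReal t)
    (hGk : ∀ k, eLpNorm (fun ω => G (ω k)) q (M.law x) ≤ ENNReal.ofReal (E * t)) (j : ℕ) :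
    eLpNorm (fun ω => correctedStep g c G (ω (j + 1)) (ω j)) q (M.law x)
      ≤ ENNReal.ofReal ((1 + |c| + 2 * E) * t) := by
  have hgj := (measurable_step hg j).aestronglyMeasurable (μ := M.law x)
  have hGm : ∀ k, AEStronglyMeasurable (fun ω => G (ω k)) (M.law x) := fun k =>
    (hG.comp (measurable_pi_apply k)).aestronglyMeasurable
  have hsplit : (fun ω : ℕ → 𝒳 => correctedStep g c G (ω (j + 1)) (ω j))
      = ((fun ω => g (ω (j + 1)) (ω j)) - fun _ => c)
        + ((fun ω => G (ω (j + 1))) - fun ω => G (ω j)) := rfl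
  calc eLpNorm (fun ω => correctedStep g c G (ω (j + 1)) (ω j)) q (M.law x)
      ≤ (eLpNorm (fun ω => g (ω (j + 1)) (ω j)) q (M.law x) + eLpNorm (fun _ => c) q (M.law x))
          + (eLpNorm (fun ω => G (ω (j + 1))) q (M.law x)
            + eLpNorm (fun ω => G (ω j)) q (M.law x)) := by
        rw [hsplit]
        exact (eLpNorm_add_le (hgj.sub aestronglyMeasurable_const) ((hGm _).sub (hGm _)) hq).trans
          (add_le_add (eLpNorm_sub_le hgj aestronglyMeasurable_const hq)
            (eLpNorm_sub_le (hGm _) (hGm _) hq))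
    _ ≤ (ENNReal.ofReal t + ENNReal.ofReal (|c| * t))
          + (ENNReal.ofReal (E * t) + ENNReal.ofReal (E * t)) := by
        rw [eLpNorm_const_eq_enorm (by positivity), Real.enorm_eq_ofReal_abs]
        gcongr
        · exact hstep j
        · exact le_mul_of_one_le_right (abs_nonneg c) ht
        · exact hGk _
        · exact hGk _
    _ = ENNReal.ofReal ((1 + |c| + 2 * E) * t) := by
        rw [← ENNReal.ofReal_add (by positivity) (by positivity),
          ← ENNReal.ofReal_add (by positivity) (by positivity),
          ← ENNReal.ofReal_add (by positivity) (by positivity)]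
        congr 1
        ring

/-- The prefactor of the `Lʳ` rate `n ^ (-1/2)` when `‖G(X_k)‖_r ≤ E t` for all `k`: the
martingale part of `W_n(g) - n c` plus its two boundary terms. -/
def rateConst (r c E : ℝ) : ℝ := √(2 * expansionConst r) * (1 + |c| + 2 * E) + 2 * E

lemma rateConst_pos {r c E : ℝ} (hE : 0 < E) : 0 < rateConst r c E := by
  unfold rateConst
  positivity

lemma inv_mul_add_le_rateConst_mul_div_sqrt {r c E : ℝ} (ht : 0 ≤ t) (hE : 0 ≤ E) {n : ℕ}
    (hn : 0 < n) :
    (n : ℝ)⁻¹ * (√(2 * expansionConst r * n) * ((1 + |c| + 2 * E) * t) + (E * t + E * t))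
      ≤ rateConst r c E * t / √n := by
  have hn1 : (1 : ℝ) ≤ √n := Real.one_le_sqrt.2 (by exact_mod_cast hn)
  have hnn : (n : ℝ) = √n * √n := (Real.mul_self_sqrt n.cast_nonneg).symm
  rw [le_div_iff₀ (by positivity), rateConst, Real.sqrt_mul' _ n.cast_nonneg]
  calc (n : ℝ)⁻¹ * (√(2 * expansionConst r) * √n * ((1 + |c| + 2 * E) * t) + (E * t + E * t)) * √n
      = √(2 * expansionConst r) * (1 + |c| + 2 * E) * t + 2 * E * t / √n := by
        nth_rw 1 [hnn]
        field_simp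
        ring
    _ ≤ √(2 * expansionConst r) * (1 + |c| + 2 * E) * t + 2 * E * t := by
        gcongr
        exact div_le_self (by positivity) hn1
    _ = (√(2 * expansionConst r) * (1 + |c| + 2 * E) + 2 * E) * t := by ring

lemma SolvesPoisson.eLpNorm_average_sub_le {r E : ℝ} (hG : M.SolvesPoisson g c G)
    (hg : Measurable fun q : 𝒳 × 𝒳 => g q.1 q.2)
    (hgInt : ∀ u, Integrable (fun v => g v u) (M.K u)) (hr : 2 ≤ r) (ht : 1 ≤ t) (hE : 0 ≤ E)
    (hstep : ∀ j, eLpNorm (fun ω => g (ω (j + 1)) (ω j)) (ENNReal.ofReal r) (M.law x)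
      ≤ ENNReal.ofReal t)
    (hGk : ∀ k, eLpNorm (fun ω => G (ω k)) (ENNReal.ofReal r) (M.law x) ≤ ENNReal.ofReal (E * t))
    {n : ℕ} (hn : 0 < n) :
    eLpNorm (fun ω => transitionSum g n ω / n - c) (ENNReal.ofReal r) (M.law x)
      ≤ ENNReal.ofReal (rateConst r c E * t / √n) := by
  have ht0 : 0 ≤ t := zero_le_one.trans ht
  have hq : 1 ≤ ENNReal.ofReal r := ENNReal.one_le_ofReal.2 (by linarith)
  have hd := measurable_correctedStep (c := c) hg hG.measurable
  have hsum : AEStronglyMeasurable (transitionSum (correctedStep g c G) n) (M.law x) :=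
    (Finset.measurable_sum _ fun j _ => measurable_step hd j).aestronglyMeasurable
  have hGm : ∀ k, AEStronglyMeasurable (fun ω => G (ω k)) (M.law x) := fun k =>
    (hG.measurable.comp (measurable_pi_apply k)).aestronglyMeasurable
  have hsplit : (fun ω => transitionSum g n ω / n - c)
      = (n : ℝ)⁻¹ • (transitionSum (correctedStep g c G) n
        + ((fun ω => G (ω 0)) - fun ω => G (ω n))) := by
    ext ω
    simp only [Pi.smul_apply, Pi.add_apply, Pi.sub_apply, smul_eq_mul,
      ← transitionSum_sub_eq g c G n ω]
    field_simp
  have hmart := eLpNorm_transitionSum_le (x := x) hr (by positivity) hd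
    (gtilde_correctedStep hG hgInt) (eLpNorm_correctedStep_le hg hG.measurable hq ht hE hstep hGk) n
  calc eLpNorm (fun ω => transitionSum g n ω / n - c) (ENNReal.ofReal r) (M.law x)
      ≤ ENNReal.ofReal (n : ℝ)⁻¹ *
          (ENNReal.ofReal (√(2 * expansionConst r * n) * ((1 + |c| + 2 * E) * t))
            + (ENNReal.ofReal (E * t) + ENNReal.ofReal (E * t))) := by
        rw [hsplit, eLpNorm_const_smul, Real.enorm_eq_ofReal (by positivity)]
        gcongr
        exact (eLpNorm_add_le hsum ((hGm 0).sub (hGm n)) hq).trans (add_le_add hmart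
          ((eLpNorm_sub_le (hGm 0) (hGm n) hq).trans (add_le_add (hGk 0) (hGk n))))
    _ = ENNReal.ofReal ((n : ℝ)⁻¹ *
          (√(2 * expansionConst r * n) * ((1 + |c| + 2 * E) * t) + (E * t + E * t))) := by
        rw [← ENNReal.ofReal_add (by positivity) (by positivity),
          ← ENNReal.ofReal_add (by positivity) (by positivity),
          ← ENNReal.ofReal_mul (by positivity)]
    _ ≤ ENNReal.ofReal (rateConst r c E * t / √n) :=
        ENNReal.ofReal_le_ofReal (inv_mul_add_le_rateConst_mul_div_sqrt ht0 hE hn)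

lemma SolvesPoisson.lintegral_average_sub_rpow_le {r C : ℝ} (hG : M.SolvesPoisson g c G)
    (hg : Measurable fun q : 𝒳 × 𝒳 => g q.1 q.2)
    (hgInt : ∀ u, Integrable (fun v => g v u) (M.K u)) (hκ : DriftBound M.K U C) (hA : 0 ≤ A)
    (hGU : ∀ y, |G y| ≤ A * U y) (hr : 2 ≤ r) {p : ℕ} (hp : 0 < p) {T : ℝ≥0∞} (hT1 : 1 ≤ T)
    (hT : T ≠ ⊤)
    (hstep : ∀ j, ∫⁻ ω, ENNReal.ofReal (|g (ω (j + 1)) (ω j)| ^ r) ∂M.law x ≤ T)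
    (hU : ∀ j, ∫⁻ ω, ENNReal.ofReal (U (ω (p * j + 1)) ^ r) ∂M.law x ≤ T) {n : ℕ} (hn : 0 < n) :
    ∫⁻ ω, ENNReal.ofReal (|transitionSum g n ω / n - c| ^ r) ∂M.law x
      ≤ ENNReal.ofReal (rateConst r c ((p + 1) * (1 + |c|) + A) ^ r) * T
        / (n : ℝ≥0∞) ^ (r / 2) := by
  have hr0 : 0 < r := by linarith
  have hq : 1 ≤ ENNReal.ofReal r := ENNReal.one_le_ofReal.2 (by linarith)
  set t := T.toReal ^ r⁻¹ with ht_def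
  have ht : 1 ≤ t := Real.one_le_rpow (ENNReal.toReal_mono hT hT1) (by positivity)
  have htT : ENNReal.ofReal (t ^ r) = T := by
    rw [ht_def, Real.rpow_inv_rpow ENNReal.toReal_nonneg hr0.ne', ENNReal.ofReal_toReal hT]
  have hL := (rateConst_pos (r := r) (c := c) (E := (p + 1) * (1 + |c|) + A) (by positivity)).le
  have hstep' := fun j => (eLpNorm_le_ofReal_iff hr0 (zero_le_one.trans ht)).2
    ((hstep j).trans_eq htT.symm)
  have hU' : ∀ j, eLpNorm (fun ω => U (ω (p * j + 1))) (ENNReal.ofReal r) (M.law x)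
      ≤ ENNReal.ofReal t := fun j => by
    rw [eLpNorm_le_ofReal_iff hr0 (by positivity), htT]
    simpa only [abs_of_pos (hκ.pos _)] using hU j
  have hGk := hG.eLpNorm_le hg hq ht hstep' (integrable_eval hκ hG.measurable hGU x) hA hGU hp hU'
  refine ((eLpNorm_le_ofReal_iff hr0 (by positivity)).1
    (hG.eLpNorm_average_sub_le hg hgInt hr ht (by positivity) hstep' hGk hn)).trans_eq ?_
  rw [ofReal_mul_div_sqrt_rpow hL (by positivity) hn hr0.le, htT]

end MomentBounds

end MarkovChain

/-- Proposition 2 of the paper. Under conditions (B1') (geometric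
ergodicity along the subsequences `pl + ι`, `0 ≤ ι ≤ p-1`, with rates `R ι`, exponents
`κ ι`, invariant probability measures `lam ι` and Lyapunov functions `V ι ≥ 1`) and (B2')
(`|g̃| ≤ min_ι V ι`), for any `r ≥ 2` there is a constant `W̄*_r > 0`, not depending on `x`
or `n`, such that for every `x` with `υ*_{r,max}(x) < ∞` and `g*_r(x) < ∞` and every
`n ≥ 2`, `E_x |W̄_n(g)|^r ≤ W̄*_r (1 + υ*_{r,max}(x) + g*_r(x)) / n^{r/2}`. -/
theorem statement10
    {𝒳 : Type} [MeasurableSpace 𝒳] (M : MarkovChain 𝒳)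
    (p : ℕ) (hp : 1 ≤ p)
    (V : Fin p → 𝒳 → ℝ) (hVmeas : ∀ ι, Measurable (V ι)) (hV1 : ∀ ι x, 1 ≤ V ι x)
    (lam : Fin p → Measure 𝒳) (hlamProb : ∀ ι, IsProbabilityMeasure (lam ι))
    (hlamV : ∀ ι, Integrable (V ι) (lam ι))
    (R κ : Fin p → ℝ) (hR : ∀ ι, 0 < R ι) (hκ : ∀ ι, 0 < κ ι)
    (hB1' : ∀ (ι : Fin p) (l : ℕ) (x : 𝒳) (f : 𝒳 → ℝ), Measurable f →
      (∀ y, 0 < f y) → (∀ y, f y ≤ V ι y) →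
      |(∫ ω, f (ω (p * l + (ι : ℕ))) ∂(M.law x)) - ∫ y, f y ∂(lam ι)|
        ≤ R ι * V ι x * Real.exp (-(κ ι) * l))
    (g : 𝒳 → 𝒳 → ℝ) (hg : Measurable fun q : 𝒳 × 𝒳 => g q.1 q.2)
    (hgInt : ∀ u, Integrable (fun v => g v u) (M.K u))
    (hgtildeInt : ∀ ι, Integrable (M.gtilde g) (lam ι))
    (hB2' : ∀ (x : 𝒳) (ι : Fin p), |M.gtilde g x| ≤ V ι x) :
    ∀ r : ℝ, 2 ≤ r → ∃ C : ℝ, 0 < C ∧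
      ∀ x : 𝒳,
        (⨆ (ι : Fin p) (j : ℕ),
            ∫⁻ ω, ENNReal.ofReal (V ι (ω (p * j + (ι : ℕ))) ^ r) ∂(M.law x)) < ⊤ →
        M.gStar g r x < ⊤ →
        ∀ n : ℕ, 2 ≤ n →
          (∫⁻ ω, ENNReal.ofReal
              (|(∑ j ∈ Finset.range n, g (ω (j + 1)) (ω j)) / n
                  - (1 / (p : ℝ)) * ∑ ι : Fin p, ∫ y, M.gtilde g y ∂(lam ι)| ^ r)
            ∂(M.law x))
            ≤ ENNReal.ofReal C *
                (1 + (⨆ (ι : Fin p) (j : ℕ),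
                    ∫⁻ ω, ENNReal.ofReal (V ι (ω (p * j + (ι : ℕ))) ^ r) ∂(M.law x))
                  + M.gStar g r x) / (n : ℝ≥0∞) ^ (r / 2) := by
  intro r hr
  have herg : ∀ ι : Fin p, ErgodicAlong M.K p ι (V ι) (lam ι) (R ι) (κ ι) := fun ι =>
    ⟨hVmeas ι, hV1 ι, hlamV ι, (hR ι).le, hκ ι, fun l y f hf hpos hle =>
      M.integral_eval y _ hf ▸ hB1' ι l y f hf hpos hle⟩
  let ι₀ : Fin p := ⟨1 % p, Nat.mod_lt 1 hp⟩
  have herg₀ : ErgodicAlong M.K p 1 (V ι₀) (lam ι₀) (R ι₀) (κ ι₀) := (herg ι₀).of_one_mod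
  set c := ∫ y, M.gtilde g y ∂lam ι₀
  obtain ⟨A, G, hA, hGV, hG⟩ := MarkovChain.exists_solvesPoisson herg₀ hp hg (hB2' · ι₀)
  refine ⟨MarkovChain.rateConst r c ((p + 1) * (1 + |c|) + A) ^ r,
    Real.rpow_pos_of_pos (MarkovChain.rateConst_pos (by positivity)) r, fun x hΥ hΓ n hn => ?_⟩
  have : Nonempty 𝒳 := ⟨x⟩
  rw [herg₀.average_integral_eq herg hp (M.measurable_gtilde hg) (hB2' · ι₀) hB2']
  refine hG.lintegral_average_sub_rpow_le hg hgInt herg₀.driftBound hA hGV hr hp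
    (le_add_right le_self_add) (by finiteness) ?_ ?_ (by omega)
  · intro j
    exact (le_iSup (fun j => ∫⁻ ω, ENNReal.ofReal (|g (ω (j + 1)) (ω j)| ^ r) ∂M.law x) j).trans
      le_add_self
  · intro j
    rw [mul_add_one_eq_mul_add_one_mod]
    exact (le_iSup₂ (f := fun (ι : Fin p) (j : ℕ) => ∫⁻ ω, ENNReal.ofReal
      (V ι (ω (p * j + ι)) ^ r) ∂M.law x) ι₀ (j + 1 / p)).trans (le_add_self.trans le_self_add)
end
end

section
/- For any 0 < β < 1, any integer m* ≥ |log(1−β)|/|log(1−ϱ_{1,β})| − 1 and any integer k* > m*, the following inclusions hold: Δ(α₂(β,k*), ϱ_{2,β}) ⊆ H(β,k*,m*) ⊆ Δ(α₁(β,m*), ϱ_{1,β}). -/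
/-!
Both inclusions compare the false-alarm probabilities `p k = P_∞(τ ≤ k)`, which are nondecreasing
in `k`, with the tails `∑_{k ≥ n} ϱ(1-ϱ)^k = (1-ϱ)^n` of the geometric prior.

For `Δ(α₂,ϱ₂) ⊆ H`, the terms `k ≥ k*` of the weighted false-alarm sum add up to at least
`(1-ϱ₂)^{k*} p k*`, so `p k* ≤ β`; every window involved lies in `{τ ≤ k*}`.

For `H ⊆ Δ(α₁,ϱ₁)`, the window starting at `1` is `{τ ≤ m*}`, because `τ ≥ 1`; hence `p m* ≤ β`.
The terms `k ≤ m*` of the weighted sum then contribute at most `β`, and the terms `k > m*` at most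
the prior tail `(1-ϱ₁)^{m*+1}`.
-/

open MeasureTheory Filter Set Topology ENNReal

noncomputable section

/-- A general change-point model: a filtration `F` on `Ω`, probability measures `P k`
(the change occurs immediately after time `k`) and `Pinf` (no change), such that `P k`
and `Pinf` agree on `F n` for `n ≤ k` and are mutually absolutely continuous
on `F n` for `n > k`. -/
structure ChangePointModel (Ω : Type) [m0 : MeasurableSpace Ω] where
  F : ℕ → MeasurableSpace Ω
  F_le : ∀ n, F n ≤ m0
  F_mono : Monotone F
  F_zero : F 0 = ⊥
  P : ℕ → Measure Ω
  Pinf : Measure Ω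
  P_prob : ∀ k, IsProbabilityMeasure (P k)
  Pinf_prob : IsProbabilityMeasure Pinf
  agree : ∀ k n : ℕ, n ≤ k → (P k).trim (F_le n) = Pinf.trim (F_le n)
  ac₁ : ∀ k n : ℕ, k < n → (P k).trim (F_le n) ≪ Pinf.trim (F_le n)
  ac₂ : ∀ k n : ℕ, k < n → Pinf.trim (F_le n) ≪ (P k).trim (F_le n)

namespace ChangePointModel

variable {Ω : Type} [m0 : MeasurableSpace Ω] (M : ChangePointModel Ω)

/-- The log-likelihood ratio `Z n k = log (d(P k|F n)/d(P∞|F n))`. -/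
def Z (n k : ℕ) (ω : Ω) : ℝ :=
  Real.log ((((M.P k).trim (M.F_le n)).rnDeriv (M.Pinf.trim (M.F_le n))) ω).toReal

/-- A detection procedure: a stopping time of the filtration `F` with values in `{1,2,…,∞}`. -/
def IsDetection (τ : Ω → ℕ∞) : Prop :=
  (∀ ω, 1 ≤ τ ω) ∧ ∀ n : ℕ, MeasurableSet[M.F n] {ω | τ ω ≤ (n : ℕ∞)}

/-- The detection risk `R_ν(τ) = E_ν (τ - ν)⁺`. -/
def risk (ν : ℕ) (τ : Ω → ℕ∞) : ℝ≥0∞ :=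
  ∫⁻ ω, ((τ ω - (ν : ℕ∞) : ℕ∞) : ℝ≥0∞) ∂(M.P ν)

/-- The conditional detection risk `R*_ν(τ) = E_ν (τ - ν | τ > ν)`. -/
def crisk (ν : ℕ) (τ : Ω → ℕ∞) : ℝ≥0∞ :=
  M.risk ν τ / M.P ν {ω | (ν : ℕ∞) < τ ω}

/-- The moment-`ℓ` detection risk `E_ν ((τ - ν)⁺)^ℓ`. -/
def riskPow (ℓ : ℝ) (ν : ℕ) (τ : Ω → ℕ∞) : ℝ≥0∞ :=
  ∫⁻ ω, ((τ ω - (ν : ℕ∞) : ℕ∞) : ℝ≥0∞) ^ ℓ ∂(M.P ν)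

/-- The conditional moment-`ℓ` detection risk `E_ν ((τ - ν)^ℓ | τ > ν)`. -/
def criskPow (ℓ : ℝ) (ν : ℕ) (τ : Ω → ℕ∞) : ℝ≥0∞ :=
  M.riskPow ℓ ν τ / M.P ν {ω | (ν : ℕ∞) < τ ω}

/-- The Bayesian class `Δ(α,ϱ)` of detection procedures with weighted probability of
false alarm at most `α` (geometric prior with parameter `ϱ`). -/
def Delta (α ϱ : ℝ) : Set (Ω → ℕ∞) :=
  {τ | M.IsDetection τ ∧
    ∑' k : ℕ, ENNReal.ofReal (ϱ * (1 - ϱ) ^ k) * M.Pinf {ω | τ ω ≤ (k : ℕ∞)}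
      ≤ ENNReal.ofReal α}

/-- The Shiryaev–Roberts statistic `R_n = ∑_{k=1}^n exp (Z_n^{k-1})`. -/
def SRstat (n : ℕ) (ω : Ω) : ℝ :=
  ∑ k ∈ Finset.range n, Real.exp (M.Z n k ω)

/-- The Shiryaev–Roberts procedure with threshold `h`. -/
def SR (h : ℝ) (ω : Ω) : ℕ∞ :=
  sInf {n : ℕ∞ | ∃ m : ℕ, n = (m : ℕ∞) ∧ 1 ≤ m ∧ h ≤ M.SRstat m ω}

/-- Condition (A1): `Z (k+n) k / n → I` almost surely under `P k`, for every `k`. -/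
def CondA1 (I : ℝ) : Prop :=
  ∀ k : ℕ, ∀ᵐ ω ∂(M.P k),
    Tendsto (fun n : ℕ => M.Z (k + n) k ω / n) atTop (𝓝 I)

/-- Condition (A2): uniform complete convergence of `Z (k+n) k / n` to `I`. -/
def CondA2 (I : ℝ) : Prop :=
  ∀ ε : ℝ, 0 < ε →
    (∑' n : ℕ, ⨆ k : ℕ,
      M.P k {ω | ε < |M.Z (k + (n + 1)) k ω / (n + 1) - I|}) < ⊤

/-- Uniform `r`-complete convergence of `Z (k+n) k / n` to `I`. -/
def CondAr (r I : ℝ) : Prop :=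
  ∀ ε : ℝ, 0 < ε →
    (∑' n : ℕ, ENNReal.ofReal ((n + 1 : ℝ) ^ (r - 1)) * ⨆ k : ℕ,
      M.P k {ω | ε < |M.Z (k + (n + 1)) k ω / (n + 1) - I|}) < ⊤

/-- The class `H(β,k*,m*)` : local probability of a false alarm in windows of
length `m*` starting at `1 ≤ k ≤ k* - m*` is at most `β`. -/
def Hclass (β : ℝ) (kstar mstar : ℕ) : Set (Ω → ℕ∞) :=
  {τ | M.IsDetection τ ∧ ∀ k : ℕ, 1 ≤ k → k + mstar ≤ kstar →
    M.Pinf {ω | (k : ℕ∞) ≤ τ ω ∧ τ ω < ((k + mstar : ℕ) : ℕ∞)} ≤ ENNReal.ofReal β}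

/-- The class `H*(β,k*,m*)` : local conditional probability of a false alarm
`P_∞(τ < k+m* | τ > k)` is at most `β` for `1 ≤ k ≤ k* - m*`. -/
def HclassStar (β : ℝ) (kstar mstar : ℕ) : Set (Ω → ℕ∞) :=
  {τ | M.IsDetection τ ∧ ∀ k : ℕ, 1 ≤ k → k + mstar ≤ kstar →
    M.Pinf {ω | (k : ℕ∞) < τ ω ∧ τ ω < ((k + mstar : ℕ) : ℕ∞)}
        / M.Pinf {ω | (k : ℕ∞) < τ ω} ≤ ENNReal.ofReal β}

end ChangePointModel

/-- `ϱ_{1,β} = 1/(1+|log β|)`. -/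
def rho1 (β : ℝ) : ℝ := 1 / (1 + |Real.log β|)

/-- `ϱ_{2,β} = ϱ_{1,β}/(1+|log|log β||)`. -/
def rho2 (β : ℝ) : ℝ := rho1 β / (1 + |Real.log (|Real.log β|)|)

/-- `α₁(β,m*) = β + (1-ϱ_{1,β})^{m*+1}`. -/
def alpha1 (β : ℝ) (m : ℕ) : ℝ := β + (1 - rho1 β) ^ (m + 1)

/-- `α₂(β,k*) = β (1-ϱ_{2,β})^{k*}`. -/
def alpha2 (β : ℝ) (k : ℕ) : ℝ := β * (1 - rho2 β) ^ k

/-- `α₃(β,k*) = β (1-ϱ_{2,β})^{k*} / (1+β)`. -/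
def alpha3 (β : ℝ) (k : ℕ) : ℝ := β * (1 - rho2 β) ^ k / (1 + β)

lemma rho1_mem_Ioo {β : ℝ} (hβ : β ∈ Ioo (0 : ℝ) 1) : rho1 β ∈ Ioo (0 : ℝ) 1 := by
  have hlog : 0 < |Real.log β| := abs_pos.mpr (Real.log_neg hβ.1 hβ.2).ne
  unfold rho1
  exact ⟨by positivity, (div_lt_one (by positivity)).mpr (lt_add_of_pos_right 1 hlog)⟩

lemma rho2_le_rho1 (β : ℝ) : rho2 β ≤ rho1 β :=
  div_le_self (by unfold rho1; positivity) (le_add_of_nonneg_right (abs_nonneg _))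

lemma rho2_mem_Ioo {β : ℝ} (hβ : β ∈ Ioo (0 : ℝ) 1) : rho2 β ∈ Ioo (0 : ℝ) 1 := by
  obtain ⟨hpos, hlt⟩ := rho1_mem_Ioo hβ
  exact ⟨by unfold rho2; positivity, (rho2_le_rho1 β).trans_lt hlt⟩

/-- The geometric prior `ϱ(1-ϱ)^k` of the change point `k = 0, 1, 2, …`, with values in `ℝ≥0∞`
as in `ChangePointModel.Delta`. It is a probability distribution when `0 < ϱ ≤ 1`. -/
def geometricPrior (ϱ : ℝ) (k : ℕ) : ℝ≥0∞ := ENNReal.ofReal (ϱ * (1 - ϱ) ^ k)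

section GeometricPrior

variable {ϱ : ℝ}

lemma tsum_geometricPrior_add (hϱ : ϱ ∈ Ioc (0 : ℝ) 1) (n : ℕ) :
    ∑' k, geometricPrior ϱ (k + n) = ENNReal.ofReal ((1 - ϱ) ^ n) := by
  obtain ⟨hpos, hle⟩ := hϱ
  have hq : 0 ≤ 1 - ϱ := sub_nonneg.mpr hle
  have hsum : HasSum (fun k : ℕ ↦ ϱ * (1 - ϱ) ^ (k + n)) ((1 - ϱ) ^ n) := by
    have hterm (k : ℕ) : ϱ * (1 - ϱ) ^ (k + n) = ϱ * (1 - ϱ) ^ n * (1 - ϱ) ^ k := by ring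
    have htotal : ϱ * (1 - ϱ) ^ n * (1 - (1 - ϱ))⁻¹ = (1 - ϱ) ^ n := by
      rw [_root_.sub_sub_cancel, mul_right_comm, _root_.mul_inv_cancel₀ hpos.ne', one_mul]
    simpa only [hterm, htotal] using
      (hasSum_geometric_of_lt_one hq (sub_lt_self 1 hpos)).mul_left (ϱ * (1 - ϱ) ^ n)
  simp only [geometricPrior]
  rw [← ENNReal.ofReal_tsum_of_nonneg (fun k ↦ by positivity) hsum.summable, hsum.tsum_eq]

lemma sum_geometricPrior_le_one (hϱ : ϱ ∈ Ioc (0 : ℝ) 1) (s : Finset ℕ) :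
    ∑ k ∈ s, geometricPrior ϱ k ≤ 1 :=
  calc ∑ k ∈ s, geometricPrior ϱ k
      ≤ ∑' k, geometricPrior ϱ k := ENNReal.sum_le_tsum s
    _ = 1 := by simpa using tsum_geometricPrior_add hϱ 0

lemma ofReal_pow_mul_le_tsum_geometricPrior_mul (hϱ : ϱ ∈ Ioc (0 : ℝ) 1) {p : ℕ → ℝ≥0∞}
    (hp : Monotone p) (n : ℕ) :
    ENNReal.ofReal ((1 - ϱ) ^ n) * p n ≤ ∑' k, geometricPrior ϱ k * p k :=
  calc ENNReal.ofReal ((1 - ϱ) ^ n) * p n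
      = ∑' k, geometricPrior ϱ (k + n) * p n := by
        rw [ENNReal.tsum_mul_right, tsum_geometricPrior_add hϱ]
    _ ≤ ∑' k, geometricPrior ϱ (k + n) * p (k + n) :=
        ENNReal.tsum_le_tsum fun k ↦ by gcongr; exact hp (Nat.le_add_left n k)
    _ ≤ ∑' k, geometricPrior ϱ k * p k :=
        ENNReal.tsum_comp_le_tsum_of_injective (add_left_injective n)
          fun k ↦ geometricPrior ϱ k * p k

lemma tsum_geometricPrior_mul_le_add (hϱ : ϱ ∈ Ioc (0 : ℝ) 1) {p : ℕ → ℝ≥0∞} {c : ℝ≥0∞} {n : ℕ}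
    (hhead : ∀ k < n, p k ≤ c) (htail : ∀ k, n ≤ k → p k ≤ 1) :
    ∑' k, geometricPrior ϱ k * p k ≤ c + ENNReal.ofReal ((1 - ϱ) ^ n) := by
  rw [← ENNReal.summable.sum_add_tsum_nat_add' (k := n)]
  refine add_le_add ?_ ?_
  · calc ∑ k ∈ Finset.range n, geometricPrior ϱ k * p k
        ≤ ∑ k ∈ Finset.range n, geometricPrior ϱ k * c := by
          gcongr with k hk
          exact hhead k (Finset.mem_range.mp hk)
      _ = (∑ k ∈ Finset.range n, geometricPrior ϱ k) * c := (Finset.sum_mul ..).symm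
      _ ≤ c := mul_le_of_le_one_left' (sum_geometricPrior_le_one hϱ _)
  · calc ∑' k, geometricPrior ϱ (k + n) * p (k + n)
        ≤ ∑' k, geometricPrior ϱ (k + n) :=
          ENNReal.tsum_le_tsum fun k ↦ mul_le_of_le_one_right' (htail _ (Nat.le_add_left n k))
      _ = ENNReal.ofReal ((1 - ϱ) ^ n) := tsum_geometricPrior_add hϱ n

end GeometricPrior

namespace ChangePointModel

variable {Ω : Type} [MeasurableSpace Ω] (M : ChangePointModel Ω)

/-- The probability `P_∞(τ ≤ k)` that `τ` raises a false alarm by time `k`. -/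
def falseAlarmProb (τ : Ω → ℕ∞) (k : ℕ) : ℝ≥0∞ := M.Pinf {ω | τ ω ≤ k}

lemma falseAlarmProb_mono (τ : Ω → ℕ∞) : Monotone (M.falseAlarmProb τ) :=
  fun _ _ hjk ↦ measure_mono fun ω (hω : τ ω ≤ _) ↦ hω.trans (Nat.cast_le.mpr hjk)

lemma falseAlarmProb_le_one (τ : Ω → ℕ∞) (k : ℕ) : M.falseAlarmProb τ k ≤ 1 :=
  have := M.Pinf_prob
  prob_le_one

variable {M} {τ : Ω → ℕ∞} {β ϱ : ℝ} {mstar kstar : ℕ}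

lemma falseAlarmProb_le_of_mem_Delta (hϱ : ϱ ∈ Ioo (0 : ℝ) 1) {n : ℕ}
    (hτ : τ ∈ M.Delta (β * (1 - ϱ) ^ n) ϱ) : M.falseAlarmProb τ n ≤ ENNReal.ofReal β := by
  have hpow : 0 < (1 - ϱ) ^ n := pow_pos (sub_pos.mpr hϱ.2) n
  have hweighted : ENNReal.ofReal ((1 - ϱ) ^ n) * M.falseAlarmProb τ n ≤
      ENNReal.ofReal ((1 - ϱ) ^ n) * ENNReal.ofReal β :=
    calc ENNReal.ofReal ((1 - ϱ) ^ n) * M.falseAlarmProb τ n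
        ≤ ∑' k, geometricPrior ϱ k * M.falseAlarmProb τ k :=
          ofReal_pow_mul_le_tsum_geometricPrior_mul (Ioo_subset_Ioc_self hϱ)
            (M.falseAlarmProb_mono τ) n
      _ ≤ ENNReal.ofReal (β * (1 - ϱ) ^ n) := hτ.2
      _ = ENNReal.ofReal ((1 - ϱ) ^ n) * ENNReal.ofReal β := by
          rw [mul_comm, ENNReal.ofReal_mul hpow.le]
  exact (ENNReal.mul_le_mul_iff_right (ENNReal.ofReal_pos.mpr hpow).ne'
    ENNReal.ofReal_ne_top).mp hweighted

lemma mem_Hclass_of_falseAlarmProb_le (hτ : M.IsDetection τ)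
    (hp : M.falseAlarmProb τ kstar ≤ ENNReal.ofReal β) : τ ∈ M.Hclass β kstar mstar := by
  refine ⟨hτ, fun k _ hk ↦ (measure_mono ?_).trans hp⟩
  exact fun ω hω ↦ hω.2.le.trans (Nat.cast_le.mpr hk)

lemma falseAlarmProb_le_of_mem_Hclass (hk : mstar < kstar) (hτ : τ ∈ M.Hclass β kstar mstar) :
    M.falseAlarmProb τ mstar ≤ ENNReal.ofReal β := by
  refine (measure_mono ?_).trans (hτ.2 1 le_rfl (by lia))
  intro ω (hω : τ ω ≤ mstar)
  exact ⟨by exact_mod_cast hτ.1.1 ω, hω.trans_lt (Nat.cast_lt.mpr (by lia))⟩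

lemma mem_Delta_of_falseAlarmProb_le (hβ : 0 ≤ β) (hϱ : ϱ ∈ Ioc (0 : ℝ) 1) {n : ℕ}
    (hτ : M.IsDetection τ) (hp : M.falseAlarmProb τ n ≤ ENNReal.ofReal β) :
    τ ∈ M.Delta (β + (1 - ϱ) ^ (n + 1)) ϱ := by
  refine ⟨hτ, ?_⟩
  rw [ENNReal.ofReal_add hβ (pow_nonneg (sub_nonneg.mpr hϱ.2) _)]
  exact tsum_geometricPrior_mul_le_add hϱ
    (fun k hk ↦ (M.falseAlarmProb_mono τ (Nat.lt_succ_iff.mp hk)).trans hp)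
    (fun k _ ↦ M.falseAlarmProb_le_one τ k)

end ChangePointModel

theorem statement14_general {Ω : Type} [MeasurableSpace Ω] (M : ChangePointModel Ω)
    {β ϱ₁ ϱ₂ : ℝ} (hβ : 0 ≤ β) (hϱ₁ : ϱ₁ ∈ Ioc (0 : ℝ) 1) (hϱ₂ : ϱ₂ ∈ Ioo (0 : ℝ) 1)
    {mstar kstar : ℕ} (hk : mstar < kstar) :
    M.Delta (β * (1 - ϱ₂) ^ kstar) ϱ₂ ⊆ M.Hclass β kstar mstar ∧
    M.Hclass β kstar mstar ⊆ M.Delta (β + (1 - ϱ₁) ^ (mstar + 1)) ϱ₁ :=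
  ⟨fun _ hτ ↦ ChangePointModel.mem_Hclass_of_falseAlarmProb_le hτ.1
      (ChangePointModel.falseAlarmProb_le_of_mem_Delta hϱ₂ hτ),
    fun _ hτ ↦ ChangePointModel.mem_Delta_of_falseAlarmProb_le hβ hϱ₁ hτ.1
      (ChangePointModel.falseAlarmProb_le_of_mem_Hclass hk hτ)⟩

/-- For any `0 < β < 1`, any integer
`m* ≥ |log(1-β)|/|log(1-ϱ_{1,β})| - 1` and any integer `k* > m*`, one has
`Δ(α₂(β,k*),ϱ_{2,β}) ⊆ H(β,k*,m*) ⊆ Δ(α₁(β,m*),ϱ_{1,β})`. -/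
theorem statement14
    {Ω : Type} [m0 : MeasurableSpace Ω] (M : ChangePointModel Ω)
    (β : ℝ) (hβ : β ∈ Set.Ioo (0 : ℝ) 1) (mstar kstar : ℕ)
    (hm : |Real.log (1 - β)| / |Real.log (1 - rho1 β)| - 1 ≤ (mstar : ℝ))
    (hm1 : 1 ≤ mstar) (hk : mstar < kstar) :
    M.Delta (alpha2 β kstar) (rho2 β) ⊆ M.Hclass β kstar mstar ∧
    M.Hclass β kstar mstar ⊆ M.Delta (alpha1 β mstar) (rho1 β) := by
  exact statement14_general M hβ.1.le (Ioo_subset_Ioc_self (rho1_mem_Ioo hβ)) (rho2_mem_Ioo hβ) hk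
end
end
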